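/- Let (M,𝒳) be a small n-exact category, Y and X^{n+1} objects of M, and let ξ : 0 → H_Y → E¹ → ⋯ → Eⁿ → H_{X^{n+1}} → 0 be a complex in Mod(M) such that each E^i is Eff-closed and every homology object of ξ is weakly effaceable (i.e., ξ is an n-fold extension of H_{X^{n+1}} by H_Y in the localization of Mod(M) at the weakly effaceable functors). Then there exists an 𝒳-admissible n-exact sequence Y → Y¹ → ⋯ → Yⁿ → X^{n+1} in M such that ξ is connected to the complex 0 → H_Y → H_{Y¹} → ⋯ → H_{Yⁿ} → H_{X^{n+1}} → 0 by a finite zigzag of complexes of the same form (each with Eff-closed middle terms and all homology weakly effaceable) and morphisms of complexes restricting to the identity on H_Y and on H_{X^{n+1}}; that is, up to Yoneda equivalence the essential image of M in the localization is closed under n-extensions. -/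

import Mathlib

open CategoryTheory CategoryTheory.Limits Opposite

attribute [local instance] CategoryTheory.Limits.hasBinaryBiproducts_of_finite_biproducts

universe u

namespace NExactCat

variable {M : Type u} [SmallCategory M] [Preadditive M] [HasFiniteBiproducts M]

/-- A sequence (`ℕ`-indexed, only the indices `0, …, n+1` of the objects and `0, …, n` of the
maps being relevant) of composable morphisms in an additive category. -/
structure NSeq (M : Type u) [SmallCategory M] where
  X : ℕ → M
  d : ∀ i, X i ⟶ X (i + 1)

/-- `S` is a complex (in degrees `0, …, n+1`). -/
def NSeq.IsComplex (n : ℕ) (S : NSeq M) : Prop :=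
  ∀ i, i + 1 ≤ n → S.d i ≫ S.d (i + 1) = 0

/-- `(d¹,…,dⁿ)` is an `n`-cokernel of `d⁰`: for every `W` the sequence
`0 → Hom(X^{n+1},W) → Hom(Xⁿ,W) → ⋯ → Hom(X⁰,W)` of abelian groups is exact. -/
def RightNExact (n : ℕ) (S : NSeq M) : Prop :=
  (∀ W : M, Function.Injective fun g : S.X (n + 1) ⟶ W => S.d n ≫ g) ∧
  (∀ W : M, ∀ i, i < n → Function.Exact
      (fun g : S.X (i + 2) ⟶ W => S.d (i + 1) ≫ g)
      (fun g : S.X (i + 1) ⟶ W => S.d i ≫ g))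

/-- `(d⁰,…,d^{n-1})` is an `n`-kernel of `dⁿ`: for every `W` the sequence
`0 → Hom(W,X⁰) → Hom(W,X¹) → ⋯ → Hom(W,X^{n+1})` of abelian groups is exact. -/
def LeftNExact (n : ℕ) (S : NSeq M) : Prop :=
  (∀ W : M, Function.Injective fun g : W ⟶ S.X 0 => g ≫ S.d 0) ∧
  (∀ W : M, ∀ i, i < n → Function.Exact
      (fun g : W ⟶ S.X i => g ≫ S.d i)
      (fun g : W ⟶ S.X (i + 1) => g ≫ S.d (i + 1)))

/-- An `n`-exact sequence: a complex which is both a left and a right `n`-exact sequence. -/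
def IsNExactSeq (n : ℕ) (S : NSeq M) : Prop :=
  S.IsComplex n ∧ LeftNExact n S ∧ RightNExact n S

/-- `f` is a morphism of complexes `S ⟶ T` (in degrees `0, …, n+1`). -/
def IsNSeqHom (n : ℕ) (S T : NSeq M) (f : ∀ i, S.X i ⟶ T.X i) : Prop :=
  ∀ i, i ≤ n → S.d i ≫ f (i + 1) = f i ≫ T.d i

/-- There is a weak isomorphism `S ⟶ T`: a morphism of complexes whose components `f k` and
`f (k+1)` are isomorphisms for some `k ∈ {0,…,n+1}`, indices taken modulo `n+2`. -/
def ExistsWeakIso (n : ℕ) (S T : NSeq M) : Prop :=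
  ∃ f : ∀ i, S.X i ⟶ T.X i, IsNSeqHom n S T f ∧
    ((∃ k ≤ n, IsIso (f k) ∧ IsIso (f (k + 1))) ∨ (IsIso (f (n + 1)) ∧ IsIso (f 0)))

/-- The objects of the mapping cone `X⁰ → X¹ ⊞ Y⁰ → ⋯ → Xⁿ ⊞ Y^{n-1} → Yⁿ` of a morphism of
complexes indexed by `0, …, n`. -/
noncomputable def coneX (n : ℕ) (S T : NSeq M) (i : ℕ) : M :=
  if i = 0 then S.X 0 else if i ≤ n then S.X i ⊞ T.X (i - 1) else T.X n

lemma coneX_zero (n : ℕ) (S T : NSeq M) : coneX n S T 0 = S.X 0 := by simp [coneX]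

lemma coneX_mid (n : ℕ) (S T : NSeq M) {i : ℕ} (h0 : i ≠ 0) (h1 : i ≤ n) :
    coneX n S T i = (S.X i ⊞ T.X (i - 1)) := by simp [coneX, h0, h1]

lemma coneX_top (n : ℕ) (S T : NSeq M) {i : ℕ} (h : n < i) :
    coneX n S T i = T.X n := by
  have h0 : i ≠ 0 := by omega
  have h1 : ¬ i ≤ n := by omega
  simp [coneX, h0, h1]

/-- The differentials of the mapping cone, given in matrix form by
`d_C^k = ((-d_X^{k+1}, 0), (f^{k+1}, d_Y^k))`. -/
noncomputable def coneD (n : ℕ) (S T : NSeq M) (f : ∀ i, S.X i ⟶ T.X i) (i : ℕ) :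
    coneX n S T i ⟶ coneX n S T (i + 1) :=
  if h0 : i = 0 then
    (if h1 : 1 ≤ n then
      eqToHom (show coneX n S T i = S.X 0 by subst h0; exact coneX_zero n S T) ≫
        biprod.lift (-(S.d 0)) (f 0) ≫
        eqToHom (show (S.X 1 ⊞ T.X 0) = coneX n S T (i + 1) by
          subst h0; exact (coneX_mid n S T one_ne_zero h1).symm)
    else 0)
  else if h1 : i + 1 ≤ n then
    eqToHom (coneX_mid n S T h0 (by omega)) ≫
      biprod.lift (biprod.fst ≫ (-(S.d i)))
        (biprod.fst ≫ f i + biprod.snd ≫ (T.d (i - 1) ≫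
          eqToHom (congrArg T.X (by omega : i - 1 + 1 = i)))) ≫
      eqToHom ((coneX_mid n S T (Nat.succ_ne_zero i) h1).symm)
  else if h2 : i = n then
    eqToHom (coneX_mid n S T h0 (by omega)) ≫
      biprod.desc (f i) (T.d (i - 1) ≫ eqToHom (congrArg T.X (by omega : i - 1 + 1 = i))) ≫
      eqToHom (show T.X i = coneX n S T (i + 1) by
        rw [h2]; exact (coneX_top n S T (by omega)).symm)
  else 0

/-- The mapping cone, as an `NSeq`. -/
noncomputable def cone (n : ℕ) (S T : NSeq M) (f : ∀ i, S.X i ⟶ T.X i) : NSeq M :=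
  ⟨coneX n S T, coneD n S T f⟩

/-- The diagram determined by `f` is an `n`-pushout: the mapping cone is a right `n`-exact
sequence. -/
def IsNPushout (n : ℕ) (S T : NSeq M) (f : ∀ i, S.X i ⟶ T.X i) : Prop :=
  RightNExact n (cone n S T f)

/-- The diagram determined by `f` is an `n`-pullback: the mapping cone is a left `n`-exact
sequence. -/
def IsNPullback (n : ℕ) (S T : NSeq M) (f : ∀ i, S.X i ⟶ T.X i) : Prop :=
  LeftNExact n (cone n S T f)

/-- The shift of a sequence, `(shift S).X i = S.X (i+1)`. -/
def NSeq.shift (S : NSeq M) : NSeq M :=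
  ⟨fun i => S.X (i + 1), fun i => S.d (i + 1)⟩

/-- `g` is an `𝒳`-admissible monomorphism: it occurs as the first differential of a member
of `𝒳`. -/
def AdmMono (𝒳 : Set (NSeq M)) {A B : M} (g : A ⟶ B) : Prop :=
  ∃ Z ∈ 𝒳, ∃ (h0 : Z.X 0 = A) (h1 : Z.X 1 = B), Z.d 0 = eqToHom h0 ≫ g ≫ eqToHom h1.symm

/-- `g` is an `𝒳`-admissible epimorphism: it occurs as the last differential of a member
of `𝒳`. -/
def AdmEpi (n : ℕ) (𝒳 : Set (NSeq M)) {A B : M} (g : A ⟶ B) : Prop :=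
  ∃ Z ∈ 𝒳, ∃ (h0 : Z.X n = A) (h1 : Z.X (n + 1) = B),
    Z.d n = eqToHom h0 ≫ g ≫ eqToHom h1.symm

/-- `𝒳` is an `n`-exact structure on `M`: a class of `n`-exact sequences, closed under weak
isomorphisms, satisfying the axioms (E0), (E1), (E1ᵒᵖ), (E2) and (E2ᵒᵖ). -/
structure IsNExactStructure (n : ℕ) (𝒳 : Set (NSeq M)) : Prop where
  /-- members of `𝒳` are `n`-exact sequences -/
  nExact : ∀ Z ∈ 𝒳, IsNExactSeq n Z
  /-- `𝒳` is closed under weak isomorphisms -/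
  weakIsoClosed : ∀ Z ∈ 𝒳, ∀ T : NSeq M, IsNExactSeq n T →
      (ExistsWeakIso n Z T ∨ ExistsWeakIso n T Z) → T ∈ 𝒳
  /-- (E0): the zero sequence `0 → 0 → ⋯ → 0` is admissible -/
  zero_mem : ∃ Z ∈ 𝒳, ∀ i ≤ n + 1, IsZero (Z.X i)
  /-- (E1): admissible monomorphisms are closed under composition -/
  monoComp : ∀ {A B C : M} (g₁ : A ⟶ B) (g₂ : B ⟶ C),
      AdmMono 𝒳 g₁ → AdmMono 𝒳 g₂ → AdmMono 𝒳 (g₁ ≫ g₂)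
  /-- (E1ᵒᵖ): admissible epimorphisms are closed under composition -/
  epiComp : ∀ {A B C : M} (g₁ : A ⟶ B) (g₂ : B ⟶ C),
      AdmEpi n 𝒳 g₁ → AdmEpi n 𝒳 g₂ → AdmEpi n 𝒳 (g₁ ≫ g₂)
  /-- (E2): existence of `n`-pushouts along morphisms out of `X⁰`, with `d_Y⁰` an admissible
  monomorphism -/
  pushout : ∀ Z ∈ 𝒳, ∀ (W : M) (f0 : Z.X 0 ⟶ W),
      ∃ (T : NSeq M) (f : ∀ i, Z.X i ⟶ T.X i) (h : T.X 0 = W),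
        f 0 = f0 ≫ eqToHom h.symm ∧
        (∀ i, i + 1 ≤ n → Z.d i ≫ f (i + 1) = f i ≫ T.d i) ∧
        IsNPushout n Z T f ∧ AdmMono 𝒳 (T.d 0)
  /-- (E2ᵒᵖ): existence of `n`-pullbacks along morphisms into `Y^{n+1}`, with `d_X^n` an
  admissible epimorphism -/
  pullback : ∀ Z ∈ 𝒳, ∀ (A : M) (g : A ⟶ Z.X (n + 1)),
      ∃ (T : NSeq M) (f : ∀ i, T.X i ⟶ Z.X (i + 1)) (h : T.X n = A),
        f n = eqToHom h ≫ g ∧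
        (∀ i, i + 1 ≤ n → T.d i ≫ f (i + 1) = f i ≫ Z.d (i + 1)) ∧
        IsNPullback n T Z.shift f ∧ AdmEpi n 𝒳 (T.d (n - 1))

end NExactCat

namespace NExactCat

variable {M : Type u} [SmallCategory M] [Preadditive M] [HasFiniteBiproducts M]

/-- A functor `F ∈ Mod(M)` is weakly effaceable if every element of `F(X)` is killed by
restriction along some admissible epimorphism `V ⟶ X`. -/
def WeaklyEffaceable (n : ℕ) (𝒳 : Set (NSeq M)) (F : Mᵒᵖ ⥤ AddCommGrpCat.{u}) : Prop :=
  ∀ (X : M) (x : F.obj (op X)), ∃ (V : M) (g : V ⟶ X),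
    AdmEpi n 𝒳 g ∧ F.map g.op x = 0

/-- A functor `F ∈ Mod(M)` is `Eff`-closed (lies in `L₁(M)`) if for every admissible `n`-exact
sequence `Z` the sequence `0 → F(Z^{n+1}) → F(Zⁿ) → F(Z^{n-1})` of abelian groups is exact. -/
def EffClosed (n : ℕ) (𝒳 : Set (NSeq M)) (F : Mᵒᵖ ⥤ AddCommGrpCat.{u}) : Prop :=
  ∀ Z ∈ 𝒳, ∀ j : ℕ, j + 1 = n →
    Function.Injective (fun x : F.obj (op (Z.X (n + 1))) => F.map (Z.d n).op x) ∧
    Function.Exact (fun x : F.obj (op (Z.X (j + 2))) => F.map (Z.d (j + 1)).op x)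
      (fun x : F.obj (op (Z.X (j + 1))) => F.map (Z.d j).op x)

/-- A complex `0 → H_A → F¹ → ⋯ → Fⁿ → H_B → 0` in `Mod(M)` whose end terms are the
representable functors of `A` and `B`. -/
structure RepSeq (M : Type u) [SmallCategory M] [Preadditive M] (n : ℕ) (A B : M) where
  F : ℕ → (Mᵒᵖ ⥤ AddCommGrpCat.{u})
  τ : ∀ i, F i ⟶ F (i + 1)
  hF0 : F 0 = preadditiveYoneda.obj A
  hFtop : F (n + 1) = preadditiveYoneda.obj B
  isComplex : ∀ i, i + 1 ≤ n → τ i ≫ τ (i + 1) = 0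

/-- Every homology object of the complex `0 → F 0 → ⋯ → F (n+1) → 0` (homology being
computed objectwise, as in the functor category `Mod(M)`) is weakly effaceable. -/
def RepSeq.HomologyWeaklyEffaceable {n : ℕ} {A B : M} (𝒳 : Set (NSeq M))
    (S : RepSeq M n A B) : Prop :=
  (∀ (X : M) (x : (S.F 0).obj (op X)), (S.τ 0).app (op X) x = 0 →
    ∃ (V : M) (g : V ⟶ X), AdmEpi n 𝒳 g ∧ (S.F 0).map g.op x = 0) ∧
  (∀ i, i + 1 ≤ n → ∀ (X : M) (x : (S.F (i + 1)).obj (op X)),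
    (S.τ (i + 1)).app (op X) x = 0 →
    ∃ (V : M) (g : V ⟶ X), AdmEpi n 𝒳 g ∧
      ∃ y : (S.F i).obj (op V), (S.τ i).app (op V) y = (S.F (i + 1)).map g.op x) ∧
  (∀ (X : M) (x : (S.F (n + 1)).obj (op X)),
    ∃ (V : M) (g : V ⟶ X), AdmEpi n 𝒳 g ∧
      ∃ y : (S.F n).obj (op V), (S.τ n).app (op V) y = (S.F (n + 1)).map g.op x)

/-- `S` is an `n`-fold extension of `H_B` by `H_A` in the localization of `Mod(M)` at the
weakly effaceable functors: its middle terms are additive and `Eff`-closed, and every homology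
object of `S` is weakly effaceable. -/
def RepSeq.Good {n : ℕ} {A B : M} (𝒳 : Set (NSeq M)) (S : RepSeq M n A B) : Prop :=
  (∀ i, 1 ≤ i → i ≤ n → (S.F i).Additive ∧ EffClosed n 𝒳 (S.F i)) ∧
  S.HomologyWeaklyEffaceable 𝒳

/-- A morphism of such complexes restricting to the identity on the two end terms. -/
def RepSeqConnects {n : ℕ} {A B : M} (S T : RepSeq M n A B) : Prop :=
  ∃ φ : ∀ i, S.F i ⟶ T.F i,
    (∀ i, i ≤ n → S.τ i ≫ φ (i + 1) = φ i ≫ T.τ i) ∧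
    φ 0 = eqToHom (S.hF0.trans T.hF0.symm) ∧
    φ (n + 1) = eqToHom (S.hFtop.trans T.hFtop.symm)

/-- One step of the zigzag: both complexes are of the required form and there is a morphism
between them (in either direction) restricting to the identity on the end terms. -/
def RepSeqStep {n : ℕ} {A B : M} (𝒳 : Set (NSeq M)) (S T : RepSeq M n A B) : Prop :=
  S.Good 𝒳 ∧ T.Good 𝒳 ∧ (RepSeqConnects S T ∨ RepSeqConnects T S)

/-- The complex `0 → H_{Z⁰} → H_{Z¹} → ⋯ → H_{Z^{n+1}} → 0` of representable functors
associated with a complex `Z` in `M`. -/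
def repSeqOf (n : ℕ) (Z : NSeq M) {A B : M} (h0 : Z.X 0 = A) (htop : Z.X (n + 1) = B)
    (hcx : Z.IsComplex n) : RepSeq M n A B where
  F i := preadditiveYoneda.obj (Z.X i)
  τ i := preadditiveYoneda.map (Z.d i)
  hF0 := by show preadditiveYoneda.obj (Z.X 0) = _; rw [h0]
  hFtop := by show preadditiveYoneda.obj (Z.X (n + 1)) = _; rw [htop]
  isComplex i hi := by
    rw [← Functor.map_comp, hcx i hi]
    exact Functor.map_zero _ _ _

end NExactCat

namespace NExactCat

/-! `H_A` has a resolution `0 → H_A → I¹ → I² → ⋯`, exact up to weakly effaceable homology, whose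
terms are injective with respect to complexes of additive functors with such homology: they are the
largest additive subfunctors of injective sheaves for the topology of admissible epimorphisms.
Comparing `ξ` with this resolution yields a cocycle `z : H_B → Iⁿ⁺¹`, and pulling the resolution
back along `z` gives a complex of the required form that receives a morphism from every complex
whose comparison with the resolution has the cocycle `z`.

By `n`-exactness, `Hom(H_C, -)` keeps the resolution exact in the degrees `1, …, n`. Hence `z`,
which lifts to `Iⁿ` along some admissible epimorphism `d : Zⁿ → B`, extends to a chain map to the
resolution from an admissible sequence ending in `d`. Pushing that sequence out along the component
`H_{Z⁰} → H_A` of the chain map makes its first term `A`, and the admissible sequence so obtained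
still has the cocycle `z`. -/

/-! ### Chain maps and homotopies between sequences -/

section ChainMaps

variable {C : Type*} [Category* C] {S T : ℕ → C} {dS : ∀ i, S i ⟶ S (i + 1)}
  {dT : ∀ i, T i ⟶ T (i + 1)}

lemma exists_chainMap_of_first [HasZeroMorphisms C] (N : ℕ)
    (hT : ∀ i, i + 2 ≤ N → dT i ≫ dT (i + 1) = 0)
    (hext : ∀ i, i + 2 ≤ N → ∀ α : S (i + 1) ⟶ T (i + 2), dS i ≫ α = 0 →
      ∃ β, dS (i + 1) ≫ β = α)
    {f₀ : S 0 ⟶ T 0} {f₁ : S 1 ⟶ T 1} (h : dS 0 ≫ f₁ = f₀ ≫ dT 0) :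
    ∃ f : ∀ i, S i ⟶ T i, f 0 = f₀ ∧ f 1 = f₁ ∧
      ∀ i, i + 1 ≤ N → dS i ≫ f (i + 1) = f i ≫ dT i := by
  induction N with
  | zero =>
    exact ⟨Function.update (Function.update (fun _ => 0) 0 f₀) 1 f₁, by simp, by simp,
      fun i hi => by omega⟩
  | succ N ih =>
    obtain ⟨f, hf₀, hf₁, hf⟩ := ih (fun i hi => hT i (by omega)) (fun i hi => hext i (by omega))
    rcases N with _ | N
    · refine ⟨f, hf₀, hf₁, fun i hi => ?_⟩
      obtain rfl : i = 0 := by omega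
      rw [hf₀, hf₁, h]
    · have hzero : dS N ≫ f (N + 1) ≫ dT (N + 1) = 0 := by
        rw [← Category.assoc, hf N le_rfl, Category.assoc, hT N le_rfl, comp_zero]
      obtain ⟨β, hβ⟩ := hext N le_rfl _ hzero
      refine ⟨Function.update f (N + 2) β, by simp [hf₀], by simp [hf₁], fun i hi => ?_⟩
      rcases Nat.lt_or_ge i (N + 1) with hlt | hge
      · rw [Function.update_of_ne (by omega), Function.update_of_ne (by omega), hf i (by omega)]
      · obtain rfl : i = N + 1 := by omega
        rw [Function.update_self, Function.update_of_ne (by omega), hβ]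

lemma exists_chainMap_of_last [HasZeroMorphisms C] (N : ℕ)
    (hS : ∀ i, i + 1 ≤ N → dS i ≫ dS (i + 1) = 0)
    (hlift : ∀ i, i + 1 ≤ N → ∀ x : S i ⟶ T (i + 1), x ≫ dT (i + 1) = 0 →
      ∃ y : S i ⟶ T i, y ≫ dT i = x)
    {c : S N ⟶ T N} {c' : S (N + 1) ⟶ T (N + 1)} (h : dS N ≫ c' = c ≫ dT N) :
    ∃ f : ∀ i, S i ⟶ T i, f (N + 1) = c' ∧ ∀ i, i ≤ N → dS i ≫ f (i + 1) = f i ≫ dT i := by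
  suffices H : ∀ k, k ≤ N → ∃ f : ∀ i, S i ⟶ T i, f (N + 1) = c' ∧
      ∀ i, N ≤ i + k → i ≤ N → dS i ≫ f (i + 1) = f i ≫ dT i by
    obtain ⟨f, hf, hf'⟩ := H N le_rfl
    exact ⟨f, hf, fun i hi => hf' i (by omega) hi⟩
  intro k hk
  induction k with
  | zero =>
    refine ⟨Function.update (Function.update (fun _ => 0) N c) (N + 1) c', by simp,
      fun i h1 h2 => ?_⟩
    obtain rfl : i = N := by omega
    simpa using h
  | succ k ih =>
    obtain ⟨f, hf, hf'⟩ := ih (by omega)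
    obtain ⟨j, rfl⟩ : ∃ j, N = j + 1 + k := ⟨N - k - 1, by omega⟩
    have hzero : (dS j ≫ f (j + 1)) ≫ dT (j + 1) = 0 := by
      rw [Category.assoc, ← hf' (j + 1) (by omega) (by omega), ← Category.assoc, hS j (by omega),
        zero_comp]
    obtain ⟨y, hy⟩ := hlift j (by omega) _ hzero
    refine ⟨Function.update f j y, ?_, fun i h1 h2 => ?_⟩
    · rw [Function.update_of_ne (by omega), hf]
    · obtain rfl | hne := eq_or_ne i j
      · rw [Function.update_self, Function.update_of_ne (by omega), hy]
      · rw [Function.update_of_ne (by omega), Function.update_of_ne hne, hf' i (by omega) h2]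

variable [Preadditive C]

lemma exists_homotopy_of_first_eq_zero (n : ℕ) (hT : ∀ i, i + 1 ≤ n → dT i ≫ dT (i + 1) = 0)
    (hext : ∀ i, i + 1 ≤ n → ∀ α : S (i + 1) ⟶ T (i + 1), dS i ≫ α = 0 →
      ∃ β, dS (i + 1) ≫ β = α)
    {f : ∀ i, S i ⟶ T i} (hf : ∀ i, i + 1 ≤ n → dS i ≫ f (i + 1) = f i ≫ dT i)
    (h0 : f 0 = 0) :
    ∃ h : ∀ i, S (i + 1) ⟶ T i, h 0 = 0 ∧
      ∀ i, i + 1 ≤ n → f (i + 1) = h i ≫ dT i + dS (i + 1) ≫ h (i + 1) := by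
  induction n with
  | zero => exact ⟨fun _ => 0, rfl, fun i hi => by omega⟩
  | succ n ih =>
    obtain ⟨h, hh₀, hh⟩ := ih (fun i hi => hT i (by omega)) (fun i hi => hext i (by omega))
      (fun i hi => hf i (by omega))
    have hzero : dS n ≫ (f (n + 1) - h n ≫ dT n) = 0 := by
      rw [Preadditive.comp_sub, hf n le_rfl]
      rcases n with _ | n
      · simp [h0, hh₀]
      · rw [hh n le_rfl, Preadditive.add_comp, Category.assoc, hT n (by omega)]
        simp
    obtain ⟨β, hβ⟩ := hext n le_rfl _ hzero
    refine ⟨Function.update h (n + 1) β, by simp [hh₀], fun i hi => ?_⟩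
    rcases Nat.lt_or_ge i n with hlt | hge
    · rw [Function.update_of_ne (by omega), Function.update_of_ne (by omega), hh i (by omega)]
    · obtain rfl : i = n := by omega
      rw [Function.update_self, Function.update_of_ne (by omega), hβ]
      abel

lemma exists_last_eq_comp_of_first_eq_zero (n : ℕ)
    (hT : ∀ i, i + 1 ≤ n → dT i ≫ dT (i + 1) = 0)
    (hext : ∀ i, i + 1 ≤ n → ∀ α : S (i + 1) ⟶ T (i + 1), dS i ≫ α = 0 →
      ∃ β, dS (i + 1) ≫ β = α)
    (hcancel : ∀ α : S (n + 1) ⟶ T (n + 1), dS n ≫ α = 0 → α = 0)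
    {f : ∀ i, S i ⟶ T i} (hf : ∀ i, i ≤ n → dS i ≫ f (i + 1) = f i ≫ dT i)
    (h0 : f 0 = 0) :
    ∃ s : S (n + 1) ⟶ T n, f (n + 1) = s ≫ dT n := by
  obtain ⟨h, hh₀, hh⟩ := exists_homotopy_of_first_eq_zero n hT hext
    (fun i hi => hf i (by omega)) h0
  refine ⟨h n, sub_eq_zero.1 (hcancel _ ?_)⟩
  rw [Preadditive.comp_sub, hf n le_rfl, sub_eq_zero]
  rcases n with _ | n
  · simp [h0, hh₀]
  · rw [hh n le_rfl, Preadditive.add_comp, Category.assoc, hT n le_rfl, comp_zero, zero_add,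
      Category.assoc]

lemma exists_chainMap_with_last {n : ℕ} (hS : ∀ i, i + 1 ≤ n → dS i ≫ dS (i + 1) = 0)
    {f : ∀ i, S i ⟶ T i} (hf : ∀ i, i ≤ n → dS i ≫ f (i + 1) = f i ≫ dT i)
    {z : S (n + 1) ⟶ T (n + 1)} {s : S (n + 1) ⟶ T n} (hs : f (n + 1) - z = s ≫ dT n) :
    ∃ g : ∀ i, S i ⟶ T i, (∀ i, i ≤ n → dS i ≫ g (i + 1) = g i ≫ dT i) ∧
      (∀ i < n, g i = f i) ∧ g (n + 1) = z := by
  let g := Function.update (Function.update f n (f n - dS n ≫ s)) (n + 1) z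
  have hlast : g (n + 1) = z := Function.update_self ..
  have hn : g n = f n - dS n ≫ s := by simp [g]
  have hlt (i : ℕ) (hi : i < n) : g i = f i := by
    simp only [g, Function.update_of_ne (show i ≠ n + 1 by omega), Function.update_of_ne hi.ne]
  refine ⟨g, fun i hi => ?_, hlt, hlast⟩
  obtain rfl | hi := hi.eq_or_lt
  · rw [hlast, hn, Preadditive.sub_comp, ← hf i le_rfl, Category.assoc, ← hs,
      Preadditive.comp_sub, sub_sub_cancel]
  · rw [hlt i hi, ← hf i hi.le]
    obtain rfl | hi' := (Nat.succ_le_of_lt hi).eq_or_lt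
    · rw [hn, Preadditive.comp_sub, reassoc_of% hS i le_rfl, zero_comp, sub_zero]
    · rw [hlt (i + 1) hi']

end ChainMaps

/-! ### Replacing the tail of a sequence -/

section Splice

section Objects

variable {C : Type*}

/-- The objects of the sequence `G 0 → ⋯ → G m → P → Q → Q → ⋯`. The recursion is arranged so
that the values at `0`, and those at `i + 1` for `m + 1`, are computed definitionally. -/
def spliceX (P Q : C) : (i m : ℕ) → (G : ℕ → C) → C
  | 0, _, G => G 0
  | i + 1, 0, _ => match i with
    | 0 => P
    | _ + 1 => Q
  | i + 1, m + 1, G => spliceX P Q i m fun j => G (j + 1)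

lemma spliceX_last (P Q : C) (m : ℕ) (G : ℕ → C) : spliceX P Q (m + 2) m G = Q := by
  induction m generalizing G with
  | zero => rfl
  | succ _ ih => exact ih _

lemma spliceX_induction {P Q : C} {m : ℕ} {G : ℕ → C} {motive : C → Prop}
    (hG : ∀ i ≤ m, motive (G i)) (hP : motive P) {i : ℕ} (hi : i ≤ m + 1) :
    motive (spliceX P Q i m G) := by
  induction i generalizing G m with
  | zero => exact hG 0 (Nat.zero_le m)
  | succ i ih =>
    rcases m with _ | m
    · obtain rfl : i = 0 := by omega
      exact hP
    · exact ih (m := m) (G := fun j => G (j + 1)) (fun j hj => hG (j + 1) (by omega)) (by omega)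

end Objects

variable {C : Type*} [Category* C]

/-- The morphisms of the sequence `G 0 → ⋯ → G m → P → Q → Q → ⋯` obtained from a sequence
`G` with differential `D` by continuing it after degree `m` with `p` and `q`. -/
def spliceD {P Q : C} (q : P ⟶ Q) : (i m : ℕ) → (G : ℕ → C) → (D : ∀ j, G j ⟶ G (j + 1)) →
    (p : G m ⟶ P) → (spliceX P Q i m G ⟶ spliceX P Q (i + 1) m G)
  | 0, 0, _, _, p => p
  | 0, _ + 1, _, D, _ => D 0
  | i + 1, 0, _, _, _ => match i with
    | 0 => q
    | _ + 1 => 𝟙 Q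
  | i + 1, m + 1, G, D, p => spliceD q i m (fun j => G (j + 1)) (fun j => D (j + 1)) p

variable {G : ℕ → C} {D : ∀ j, G j ⟶ G (j + 1)} {m : ℕ} {P Q : C} {p : G m ⟶ P} {q : P ⟶ Q}

lemma spliceD_first {motive : ∀ {X Y : C}, (X ⟶ Y) → Prop} (hD : 0 < m → motive (D 0))
    (hp : ∀ h : 0 = m, motive (eqToHom (congrArg G h) ≫ p)) : motive (spliceD q 0 m G D p) := by
  rcases m with _ | m
  · have h := hp rfl
    rwa [eqToHom_refl, Category.id_comp] at h
  · exact hD m.succ_pos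

lemma spliceD_last {motive : ∀ {X Y : C}, (X ⟶ Y) → Prop} (hq : motive q) :
    motive (spliceD q (m + 1) m G D p) := by
  induction m generalizing G with
  | zero => exact hq
  | succ m ih => exact ih (G := fun j => G (j + 1)) (D := fun j => D (j + 1))

lemma spliceD_consecutive {motive : ∀ {X Y Z : C}, (X ⟶ Y) → (Y ⟶ Z) → Prop}
    (hD : ∀ i, i + 1 < m → motive (D i) (D (i + 1)))
    (hp : ∀ i (h : i + 1 = m), motive (D i) (eqToHom (congrArg G h) ≫ p)) (hq : motive p q)
    {i : ℕ} (hi : i ≤ m) : motive (spliceD q i m G D p) (spliceD q (i + 1) m G D p) := by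
  induction m generalizing G i with
  | zero =>
    obtain rfl : i = 0 := by omega
    exact hq
  | succ m ih =>
    rcases i with _ | i
    · rcases m with _ | m
      · have h := hp 0 rfl
        rwa [eqToHom_refl, Category.id_comp] at h
      · exact hD 0 (by omega)
    · exact ih (i := i) (G := fun j => G (j + 1)) (D := fun j => D (j + 1)) (p := p)
        (fun j hj => hD (j + 1) (by omega)) (fun j hj => hp (j + 1) (by omega)) hq (by omega)

lemma exists_chainMap_splice [HasZeroMorphisms C] {X : ℕ → C} {dX : ∀ i, X i ⟶ X (i + 1)}
    (e : ∀ i, X i ⟶ G i) {l : X (m + 1) ⟶ P} {t : X (m + 2) ⟶ Q}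
    (he : ∀ i < m, dX i ≫ e (i + 1) = e i ≫ D i) (hl : dX m ≫ l = e m ≫ p)
    (ht : dX (m + 1) ≫ t = l ≫ q) :
    ∃ φ : ∀ i, X i ⟶ spliceX P Q i m G,
      (∀ i, i ≤ m + 1 → dX i ≫ φ (i + 1) = φ i ≫ spliceD q i m G D p) ∧
      φ 0 = e 0 ∧ φ (m + 2) = t ≫ eqToHom (spliceX_last P Q m G).symm := by
  induction m generalizing X G with
  | zero =>
    exact ⟨fun | 0 => e 0 | 1 => l | 2 => t | _ + 3 => 0, fun | 0, _ => hl | 1, _ => ht, rfl,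
      (Category.comp_id t).symm⟩
  | succ m ih =>
    obtain ⟨φ, hφ, hφ₀, hφlast⟩ := ih (G := fun j => G (j + 1)) (D := fun j => D (j + 1))
      (fun i => e (i + 1)) (fun i hi => he (i + 1) (by omega)) hl ht
    refine ⟨fun | 0 => e 0 | i + 1 => φ i, fun i hi => ?_, rfl, hφlast⟩
    match i with
    | 0 => exact (congrArg (dX 0 ≫ ·) hφ₀).trans (he 0 m.succ_pos)
    | i + 1 => exact hφ i (by omega)

end Splice

/-! ### Right `n`-exact sequences and `n`-pushouts -/

section WeakCokernel

variable {C : Type*} [Category* C] [HasZeroMorphisms C] {X Y Z : C}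

/-- `g` is a weak cokernel of `f`: a cokernel without the uniqueness of factorizations. -/
structure IsWeakCokernel (f : X ⟶ Y) (g : Y ⟶ Z) : Prop where
  comp_eq_zero : f ≫ g = 0
  exists_desc {W : C} (α : Y ⟶ W) : f ≫ α = 0 → ∃ β, g ≫ β = α

/-- `f` is a weak kernel of `g`: a kernel without the uniqueness of factorizations. -/
structure IsWeakKernel (f : X ⟶ Y) (g : Y ⟶ Z) : Prop where
  comp_eq_zero : f ≫ g = 0
  exists_lift {W : C} (α : W ⟶ Y) : α ≫ g = 0 → ∃ β, β ≫ f = α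

lemma isWeakCokernel_iff_forall_exact {f : X ⟶ Y} {g : Y ⟶ Z} :
    IsWeakCokernel f g ↔
      ∀ W : C, Function.Exact (fun α : Z ⟶ W => g ≫ α) (fun α : Y ⟶ W => f ≫ α) := by
  refine ⟨fun h W α => ⟨h.exists_desc α, ?_⟩, fun h => ⟨(h Z g).2 ⟨𝟙 Z, Category.comp_id g⟩,
    fun α => (h _ α).1⟩⟩
  rintro ⟨β, rfl⟩
  change f ≫ g ≫ β = 0
  rw [← Category.assoc, h.comp_eq_zero, zero_comp]

lemma isWeakKernel_iff_forall_exact {f : X ⟶ Y} {g : Y ⟶ Z} :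
    IsWeakKernel f g ↔
      ∀ W : C, Function.Exact (fun α : W ⟶ X => α ≫ f) (fun α : W ⟶ Y => α ≫ g) := by
  refine ⟨fun h W α => ⟨h.exists_lift α, ?_⟩, fun h => ⟨(h X f).2 ⟨𝟙 X, Category.id_comp f⟩,
    fun α => (h _ α).1⟩⟩
  rintro ⟨β, rfl⟩
  change (β ≫ f) ≫ g = 0
  rw [Category.assoc, h.comp_eq_zero, comp_zero]

end WeakCokernel

section ExactSequences

variable {M : Type u} [SmallCategory M] [Preadditive M] {n : ℕ} {S : NSeq M}

lemma rightNExact_iff :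
    RightNExact n S ↔ Epi (S.d n) ∧ ∀ i < n, IsWeakCokernel (S.d i) (S.d (i + 1)) := by
  simp only [RightNExact, isWeakCokernel_iff_forall_exact]
  exact and_congr ⟨fun h => ⟨fun _ _ hab => h _ hab⟩, fun _ _ _ _ hab => (cancel_epi _).1 hab⟩
    ⟨fun h i hi W => h W i hi, fun h W i hi => h i hi W⟩

lemma leftNExact_iff :
    LeftNExact n S ↔ Mono (S.d 0) ∧ ∀ i < n, IsWeakKernel (S.d i) (S.d (i + 1)) := by
  simp only [LeftNExact, isWeakKernel_iff_forall_exact]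
  exact and_congr ⟨fun h => ⟨fun _ _ hab => h _ hab⟩, fun _ _ _ _ hab => (cancel_mono _).1 hab⟩
    ⟨fun h i hi W => h W i hi, fun h W i hi => h i hi W⟩

lemma LeftNExact.mono (hS : LeftNExact n S) : Mono (S.d 0) := (leftNExact_iff.1 hS).1

lemma LeftNExact.isWeakKernel (hS : LeftNExact n S) {i : ℕ} (hi : i < n) :
    IsWeakKernel (S.d i) (S.d (i + 1)) :=
  (leftNExact_iff.1 hS).2 i hi

lemma RightNExact.epi (hS : RightNExact n S) : Epi (S.d n) := (rightNExact_iff.1 hS).1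

lemma RightNExact.isWeakCokernel (hS : RightNExact n S) {i : ℕ} (hi : i < n) :
    IsWeakCokernel (S.d i) (S.d (i + 1)) :=
  (rightNExact_iff.1 hS).2 i hi

lemma RightNExact.isComplex (hS : RightNExact n S) : S.IsComplex n :=
  fun _ hi => (hS.isWeakCokernel hi).comp_eq_zero

lemma LeftNExact.of_homotopy {Z : NSeq M} (hZ : LeftNExact n Z) (hS : S.IsComplex n)
    {f : ∀ i, S.X i ⟶ Z.X i} {g : ∀ i, Z.X i ⟶ S.X i} (hf : IsNSeqHom n S Z f)
    (hg : IsNSeqHom n Z S g) (hf₀ : Mono (f 0)) {h : ∀ i, S.X (i + 1) ⟶ S.X i}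
    (hh : ∀ i, i + 1 ≤ n →
      𝟙 _ - f (i + 1) ≫ g (i + 1) = h i ≫ S.d i + S.d (i + 1) ≫ h (i + 1)) :
    LeftNExact n S := by
  refine leftNExact_iff.2 ⟨?_, fun i hi => ⟨hS i hi, fun {W} x hx => ?_⟩⟩
  · have := hZ.mono
    exact mono_of_mono_fac (hf 0 (Nat.zero_le n))
  · have hcycle : (x ≫ f (i + 1)) ≫ Z.d (i + 1) = 0 := by
      rw [Category.assoc, ← hf (i + 1) hi, reassoc_of% hx, zero_comp]
    obtain ⟨y, hy⟩ := (hZ.isWeakKernel hi).exists_lift _ hcycle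
    have hx' : x - x ≫ f (i + 1) ≫ g (i + 1) = x ≫ h i ≫ S.d i := by
      simpa [reassoc_of% hx] using x ≫= hh i hi
    refine ⟨y ≫ g i + x ≫ h i, ?_⟩
    rw [Preadditive.add_comp, Category.assoc, Category.assoc, ← hx', ← hg i hi.le,
      reassoc_of% hy, add_sub_cancel]

end ExactSequences

section Cone

variable {M : Type u} [SmallCategory M] [Preadditive M] [HasFiniteBiproducts M] {m : ℕ}
  {S T : NSeq M} {f : ∀ i, S.X i ⟶ T.X i}

lemma coneX_succ (S T : NSeq M) {i : ℕ} (hi : i ≤ m) :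
    coneX (m + 1) S T (i + 1) = (S.X (i + 1) ⊞ T.X i) :=
  coneX_mid (m + 1) S T (Nat.succ_ne_zero i) (by omega)

lemma coneX_last (S T : NSeq M) : coneX (m + 1) S T (m + 2) = T.X (m + 1) :=
  coneX_top (m + 1) S T (Nat.lt_succ_self _)

lemma coneD_zero : coneD (m + 1) S T f 0 =
    eqToHom (coneX_zero _ S T) ≫ biprod.lift (-(S.d 0)) (f 0) ≫
      eqToHom (coneX_succ S T (Nat.zero_le m)).symm := by
  simp [coneD]

lemma coneD_succ {i : ℕ} (hi : i + 1 ≤ m) : coneD (m + 1) S T f (i + 1) =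
    eqToHom (coneX_succ S T (by omega)) ≫
      biprod.lift (biprod.fst ≫ (-(S.d (i + 1)))) (biprod.fst ≫ f (i + 1) + biprod.snd ≫ T.d i) ≫
      eqToHom (coneX_succ S T hi).symm := by
  have h : i + 1 + 1 ≤ m + 1 := by omega
  simp only [coneD, h, dif_pos, Nat.succ_ne_zero, dif_neg, not_false_eq_true]
  simp

lemma coneD_last : coneD (m + 1) S T f (m + 1) =
    eqToHom (coneX_succ S T le_rfl) ≫ biprod.desc (f (m + 1)) (T.d m) ≫
      eqToHom (coneX_last S T).symm := by
  have h : ¬ (m + 1 + 1 ≤ m + 1) := by omega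
  simp only [coneD, h, Nat.succ_ne_zero, dif_neg, not_false_eq_true, dif_pos]
  simp

lemma inr_comp_coneD_succ {i : ℕ} (hi : i + 1 ≤ m) :
    biprod.inr ≫ eqToHom (coneX_succ S T (by omega)).symm ≫ coneD (m + 1) S T f (i + 1) =
      T.d i ≫ biprod.inr ≫ eqToHom (coneX_succ S T hi).symm := by
  have : biprod.inr ≫ biprod.lift (biprod.fst ≫ (-(S.d (i + 1))))
      (biprod.fst ≫ f (i + 1) + biprod.snd ≫ T.d i) = T.d i ≫ biprod.inr := by
    ext <;> simp
  rw [coneD_succ hi, eqToHom_trans_assoc, eqToHom_refl, Category.id_comp, reassoc_of% this]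

lemma inr_comp_coneD_last :
    biprod.inr ≫ eqToHom (coneX_succ S T le_rfl).symm ≫ coneD (m + 1) S T f (m + 1) =
      T.d m ≫ eqToHom (coneX_last S T).symm := by
  simp [coneD_last]

lemma inl_comp_coneD_last :
    biprod.inl ≫ eqToHom (coneX_succ S T le_rfl).symm ≫ coneD (m + 1) S T f (m + 1) =
      f (m + 1) ≫ eqToHom (coneX_last S T).symm := by
  simp [coneD_last]

lemma coneD_comp_desc {i : ℕ} (hi : i ≤ m) {W : M}
    {a : S.X (i + 1) ⟶ W} {b : T.X i ⟶ W} (hab : S.d i ≫ a = f i ≫ b)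
    (hb : ∀ j (h : j + 1 = i), T.d j ≫ eqToHom (congrArg T.X h) ≫ b = 0) :
    coneD (m + 1) S T f i ≫ eqToHom (coneX_succ S T hi) ≫ biprod.desc a b = 0 := by
  rcases i with _ | i
  · simp [coneD_zero, hab]
  · have hb' : T.d i ≫ b = 0 := by simpa using hb i rfl
    have : biprod.lift (biprod.fst ≫ (-(S.d (i + 1))))
        (biprod.fst ≫ f (i + 1) + biprod.snd ≫ T.d i) ≫ biprod.desc a b = 0 := by
      ext <;> simp [hab, hb']
    rw [coneD_succ hi]
    simp only [Category.assoc, eqToHom_trans_assoc, eqToHom_refl, Category.id_comp]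
    rw [this, comp_zero]

namespace IsNPushout

lemma hom_ext (hp : IsNPushout (m + 1) S T f) {W : M} {g g' : T.X (m + 1) ⟶ W}
    (hf : f (m + 1) ≫ g = f (m + 1) ≫ g') (hT : T.d m ≫ g = T.d m ≫ g') : g = g' := by
  have hepi : Epi (coneD (m + 1) S T f (m + 1)) := RightNExact.epi hp
  rw [← cancel_epi (eqToHom (coneX_last S T)), ← cancel_epi (coneD (m + 1) S T f (m + 1)),
    coneD_last]
  simp only [Category.assoc, eqToHom_trans_assoc, eqToHom_refl, Category.id_comp]
  congr 1
  ext <;> simpa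

lemma exists_coneD_comp (hp : IsNPushout (m + 1) S T f) {i : ℕ} (hi : i ≤ m) {W : M}
    {a : S.X (i + 1) ⟶ W} {b : T.X i ⟶ W} (hab : S.d i ≫ a = f i ≫ b)
    (hb : ∀ j (h : j + 1 = i), T.d j ≫ eqToHom (congrArg T.X h) ≫ b = 0) :
    ∃ g : coneX (m + 1) S T (i + 2) ⟶ W,
      coneD (m + 1) S T f (i + 1) ≫ g = eqToHom (coneX_succ S T hi) ≫ biprod.desc a b :=
  (RightNExact.isWeakCokernel hp (Nat.lt_succ_of_le hi)).exists_desc _ (coneD_comp_desc hi hab hb)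

lemma exists_desc (hp : IsNPushout (m + 1) S T f) {W : M}
    {a : S.X (m + 1) ⟶ W} {b : T.X m ⟶ W} (hab : S.d m ≫ a = f m ≫ b)
    (hb : ∀ j (h : j + 1 = m), T.d j ≫ eqToHom (congrArg T.X h) ≫ b = 0) :
    ∃ g : T.X (m + 1) ⟶ W, f (m + 1) ≫ g = a ∧ T.d m ≫ g = b := by
  obtain ⟨g, hg⟩ := hp.exists_coneD_comp le_rfl hab hb
  refine ⟨eqToHom (coneX_last S T).symm ≫ g, ?_, ?_⟩
  · rw [← Category.assoc, ← inl_comp_coneD_last, Category.assoc, Category.assoc, hg]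
    simp
  · rw [← Category.assoc, ← inr_comp_coneD_last, Category.assoc, Category.assoc, hg]
    simp

lemma exists_d_comp (hp : IsNPushout (m + 1) S T f) {i : ℕ} (hi : i + 1 ≤ m) {W : M}
    {a : S.X (i + 1) ⟶ W} {b : T.X i ⟶ W} (hab : S.d i ≫ a = f i ≫ b)
    (hb : ∀ j (h : j + 1 = i), T.d j ≫ eqToHom (congrArg T.X h) ≫ b = 0) :
    ∃ g : T.X (i + 1) ⟶ W, T.d i ≫ g = b := by
  obtain ⟨g, hg⟩ := hp.exists_coneD_comp (i := i) (by omega) hab hb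
  refine ⟨biprod.inr ≫ eqToHom (coneX_succ S T hi).symm ≫ g, ?_⟩
  have := inr_comp_coneD_succ (f := f) hi =≫ g
  simp only [Category.assoc] at this
  rw [← this, hg]
  simp

lemma d_comp_d (hp : IsNPushout (m + 1) S T f) {i : ℕ} (hi : i + 1 ≤ m) :
    T.d i ≫ T.d (i + 1) = 0 := by
  have h : coneD (m + 1) S T f (i + 1) ≫ coneD (m + 1) S T f (i + 2) = 0 :=
    RightNExact.isComplex hp (i + 1) (by omega)
  have h' := biprod.inr ≫= (eqToHom (coneX_succ S T (by omega)).symm ≫= h)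
  rw [comp_zero, comp_zero, ← Category.assoc, ← Category.assoc, Category.assoc biprod.inr,
    inr_comp_coneD_succ hi, Category.assoc, Category.assoc] at h'
  obtain rfl | hlt := hi.eq_or_lt
  · rw [inr_comp_coneD_last] at h'
    simpa using h' =≫ eqToHom (coneX_last S T)
  · rw [inr_comp_coneD_succ hlt] at h'
    simpa using h' =≫ (eqToHom (coneX_succ S T hlt) ≫ biprod.snd)

lemma isWeakCokernel (hp : IsNPushout (m + 1) S T f)
    (hf : ∀ i, i + 1 ≤ m + 1 → S.d i ≫ f (i + 1) = f i ≫ T.d i) (hS : RightNExact (m + 1) S)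
    {i : ℕ} (hi : i + 1 ≤ m) : IsWeakCokernel (T.d i) (T.d (i + 1)) := by
  refine ⟨hp.d_comp_d hi, fun b hb => ?_⟩
  have hzero : S.d i ≫ f (i + 1) ≫ b = 0 := by
    rw [← Category.assoc, hf i (by omega), Category.assoc, hb, comp_zero]
  obtain ⟨a, ha⟩ := (hS.isWeakCokernel (i := i) (by omega)).exists_desc _ hzero
  have hb' : ∀ j (h : j + 1 = i + 1), T.d j ≫ eqToHom (congrArg T.X h) ≫ b = 0 := by
    rintro j h
    obtain rfl : j = i := by omega
    simpa using hb
  obtain rfl | hlt := hi.eq_or_lt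
  · obtain ⟨g, -, hg⟩ := hp.exists_desc ha hb'
    exact ⟨g, hg⟩
  · exact hp.exists_d_comp hlt ha hb'

lemma isWeakCokernel_last (hp : IsNPushout (m + 1) S T f)
    (hf : ∀ i, i + 1 ≤ m + 1 → S.d i ≫ f (i + 1) = f i ≫ T.d i) (hS : RightNExact (m + 1) S)
    {q : T.X (m + 1) ⟶ S.X (m + 2)} (hq : f (m + 1) ≫ q = S.d (m + 1)) (hq' : T.d m ≫ q = 0) :
    IsWeakCokernel (T.d m) q := by
  refine ⟨hq', fun b hb => ?_⟩
  have hzero : S.d m ≫ f (m + 1) ≫ b = 0 := by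
    rw [← Category.assoc, hf m le_rfl, Category.assoc, hb, comp_zero]
  obtain ⟨a, ha⟩ := (hS.isWeakCokernel m.lt_succ_self).exists_desc _ hzero
  refine ⟨a, hp.hom_ext ?_ ?_⟩
  · rw [reassoc_of% hq, ha]
  · rw [reassoc_of% hq', zero_comp, hb]

end IsNPushout

end Cone

namespace IsNExactStructure

variable {M : Type u} [SmallCategory M] [Preadditive M] [HasFiniteBiproducts M] {n : ℕ}
  {𝒳 : Set (NSeq M)}

lemma mem_of_admMono (h𝒳 : IsNExactStructure n 𝒳) {S : NSeq M} (hS : RightNExact n S)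
    (h : AdmMono 𝒳 (S.d 0)) : S ∈ 𝒳 := by
  obtain ⟨Z, hZ, h₀, h₁, hd⟩ := h
  obtain ⟨hZc, hZl, hZr⟩ := h𝒳.nExact Z hZ
  have hSc := hS.isComplex
  obtain ⟨f, hf₀, hf₁, hf⟩ := exists_chainMap_of_first (n + 1) (fun i hi => hZc i (by omega))
    (fun i hi α => (hS.isWeakCokernel (i := i) (by omega)).exists_desc α)
    (f₀ := eqToHom h₀.symm) (f₁ := eqToHom h₁.symm) (dT := Z.d) (by simp [hd])
  obtain ⟨g, hg₀, -, hg⟩ := exists_chainMap_of_first (n + 1) (fun i hi => hSc i (by omega))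
    (fun i hi α => (hZr.isWeakCokernel (i := i) (by omega)).exists_desc α)
    (f₀ := eqToHom h₀) (f₁ := eqToHom h₁) (dT := S.d) (by simp [hd])
  obtain ⟨h, -, hh⟩ := exists_homotopy_of_first_eq_zero (f := fun i => 𝟙 (S.X i) - f i ≫ g i) n
    hSc (fun i hi α => (hS.isWeakCokernel (i := i) (by omega)).exists_desc α)
    (fun i hi => by
      have hfg : S.d i ≫ f (i + 1) ≫ g (i + 1) = f i ≫ g i ≫ S.d i := by
        rw [reassoc_of% hf i (by omega), hg i (by omega)]
      simp [hfg])
    (by simp [hf₀, hg₀])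
  have hfS : IsNSeqHom n S Z f := fun i hi => hf i (by omega)
  have hgZ : IsNSeqHom n Z S g := fun i hi => hg i (by omega)
  have hf₀' : IsIso (f 0) := hf₀ ▸ inferInstance
  have hf₁' : IsIso (f 1) := hf₁ ▸ inferInstance
  exact h𝒳.weakIsoClosed Z hZ S ⟨hSc, hZl.of_homotopy hSc hfS hgZ inferInstance hh, hS⟩
    (.inr ⟨f, hfS, .inl ⟨0, n.zero_le, hf₀', hf₁'⟩⟩)

lemma exists_pushout (h𝒳 : IsNExactStructure n 𝒳) (hn : 1 ≤ n) {Z : NSeq M} (hZ : Z ∈ 𝒳)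
    {W : M} (f₀ : Z.X 0 ⟶ W) :
    ∃ S ∈ 𝒳, ∃ (h0 : S.X 0 = W) (htop : S.X (n + 1) = Z.X (n + 1))
      (t : ∀ i, Z.X i ⟶ S.X i), IsNSeqHom n Z S t ∧ t 0 = f₀ ≫ eqToHom h0.symm ∧
        t (n + 1) = eqToHom htop.symm := by
  obtain ⟨m, rfl⟩ : ∃ m, n = m + 1 := ⟨n - 1, by omega⟩
  obtain ⟨hZc, -, hZr⟩ := h𝒳.nExact Z hZ
  obtain ⟨T, f, h0, hf₀, hf, hp, hmono⟩ := h𝒳.pushout Z hZ W f₀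
  obtain ⟨q, hq, hq'⟩ := hp.exists_desc (a := Z.d (m + 1)) (b := 0)
    (by rw [hZc m le_rfl, comp_zero]) (by simp)
  have hepi : Epi q := by
    have := hZr.epi
    exact epi_of_epi_fac hq
  let S : NSeq M := ⟨fun i => spliceX (T.X (m + 1)) (Z.X (m + 2)) i m T.X,
    fun i => spliceD q i m T.X T.d (T.d m)⟩
  have hS : RightNExact (m + 1) S :=
    rightNExact_iff.2 ⟨spliceD_last (motive := fun {_ _} d => Epi d) hepi, fun i hi =>
      spliceD_consecutive (motive := fun {_ _ _} d d' => IsWeakCokernel d d') (D := T.d) (q := q)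
        (fun i hi => hp.isWeakCokernel hf hZr hi.le)
        (fun i h => by
          subst h
          simpa using hp.isWeakCokernel hf hZr le_rfl)
        (hp.isWeakCokernel_last hf hZr hq hq') (by omega)⟩
  have hS₀ : AdmMono 𝒳 (S.d 0) :=
    spliceD_first (motive := fun {_ _} d => AdmMono 𝒳 d) (fun _ => hmono) (fun h => by
      subst h
      simpa using hmono)
  obtain ⟨t, ht, ht₀, htlast⟩ := exists_chainMap_splice (D := T.d) (p := T.d m) (q := q) f
    (fun i hi => hf i (by omega)) (hf m le_rfl) (t := 𝟙 (Z.X (m + 2)))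
    (by rw [hq, Category.comp_id])
  exact ⟨S, h𝒳.mem_of_admMono hS hS₀, h0, spliceX_last _ _ m _, t, ht, ht₀.trans hf₀,
    htlast.trans (Category.id_comp _)⟩

end IsNExactStructure

/-! ### The topology generated by admissible epimorphisms -/

section AdmissibleEpimorphisms

variable {M : Type u} [SmallCategory M] {n : ℕ} {𝒳 : Set (NSeq M)}

lemma AdmEpi.of_mem {Z : NSeq M} (hZ : Z ∈ 𝒳) : AdmEpi n 𝒳 (Z.d n) :=
  ⟨Z, hZ, rfl, rfl, by simp⟩

@[elab_as_elim]
lemma AdmEpi.induction {motive : ∀ {A B : M} (g : A ⟶ B), AdmEpi n 𝒳 g → Prop}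
    (of_mem : ∀ (Z : NSeq M) (hZ : Z ∈ 𝒳), motive (Z.d n) (.of_mem hZ)) {A B : M} {g : A ⟶ B}
    (hg : AdmEpi n 𝒳 g) : motive g hg := by
  obtain ⟨Z, hZ, rfl, rfl, hd⟩ := hg
  obtain rfl : Z.d n = g := by simpa using hd
  exact of_mem Z hZ

end AdmissibleEpimorphisms

namespace IsNExactStructure

variable {M : Type u} [SmallCategory M] [Preadditive M] [HasFiniteBiproducts M] {n : ℕ}
  {𝒳 : Set (NSeq M)}

lemma exists_pullback (h𝒳 : IsNExactStructure n 𝒳) (hn : 1 ≤ n) {V X W : M} {g : V ⟶ X}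
    (hg : AdmEpi n 𝒳 g) (w : W ⟶ X) :
    ∃ (U : M) (p : U ⟶ W) (q : U ⟶ V), AdmEpi n 𝒳 p ∧ p ≫ w = q ≫ g := by
  obtain ⟨m, rfl⟩ := Nat.exists_eq_add_of_le' hn
  induction hg using AdmEpi.induction with
  | of_mem Z hZ =>
    obtain ⟨T, f, rfl, hf, hcomm, -, hepi⟩ := h𝒳.pullback Z hZ W w
    refine ⟨_, T.d m, f m, hepi, ?_⟩
    rw [← hcomm m le_rfl, hf, eqToHom_refl, Category.id_comp]

lemma exists_admEpi (h𝒳 : IsNExactStructure n 𝒳) (hn : 1 ≤ n) (X : M) :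
    ∃ (V : M) (g : V ⟶ X), AdmEpi n 𝒳 g := by
  obtain ⟨Z, hZ, -⟩ := h𝒳.zero_mem
  obtain ⟨U, p, -, hp, -⟩ := h𝒳.exists_pullback hn (.of_mem hZ) (0 : X ⟶ _)
  exact ⟨U, p, hp⟩

/-- The Grothendieck topology whose covering sieves are those containing an admissible
epimorphism. -/
def admTopology (h𝒳 : IsNExactStructure n 𝒳) (hn : 1 ≤ n) : GrothendieckTopology M where
  sieves X := {S | ∃ (V : M) (g : V ⟶ X), AdmEpi n 𝒳 g ∧ S g}
  top_mem' X := by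
    obtain ⟨V, g, hg⟩ := h𝒳.exists_admEpi hn X
    exact ⟨V, g, hg, trivial⟩
  pullback_stable' X W S w := by
    rintro ⟨V, g, hg, hS⟩
    obtain ⟨U, p, q, hp, h⟩ := h𝒳.exists_pullback hn hg w
    refine ⟨U, p, hp, ?_⟩
    rw [Sieve.pullback_apply, h]
    exact S.downward_closed hS q
  transitive' X S hS R hR := by
    obtain ⟨V, g, hg, hSg⟩ := hS
    obtain ⟨U, p, hp, hRp⟩ := hR hSg
    exact ⟨U, p ≫ g, h𝒳.epiComp p g hp hg, hRp⟩

end IsNExactStructure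

/-! ### Elements of functors and morphisms from representable functors -/

section YonedaEval

variable {M : Type u} [SmallCategory M] [Preadditive M] {F G : Mᵒᵖ ⥤ AddCommGrpCat.{u}}
  {X W : M}

/-- The Yoneda map `Hom(H_X, F) → F(X)`: evaluation at the identity of `X`. It is injective for
every presheaf `F`, but surjective only for additive `F`. -/
def yonedaEval : (preadditiveYoneda.obj X ⟶ F) →+ F.obj (op X) where
  toFun α := α.app (op X) (𝟙 X)
  map_zero' := rfl
  map_add' _ _ := rfl

lemma yonedaEval_comp (α : preadditiveYoneda.obj X ⟶ F) (β : F ⟶ G) :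
    yonedaEval (α ≫ β) = β.app (op X) (yonedaEval α) := rfl

lemma app_eq_map_yonedaEval (α : preadditiveYoneda.obj X ⟶ F) (f : W ⟶ X) :
    α.app (op W) f = F.map f.op (yonedaEval α) := by
  refine Eq.trans ?_ (ConcreteCategory.congr_hom (α.naturality f.op) (𝟙 X))
  exact congrArg (α.app (op W)) (Category.comp_id f).symm

lemma yonedaEval_map_comp (f : W ⟶ X) (α : preadditiveYoneda.obj X ⟶ F) :
    yonedaEval (preadditiveYoneda.map f ≫ α) = F.map f.op (yonedaEval α) := by
  rw [← app_eq_map_yonedaEval]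
  exact congrArg (α.app (op W)) (Category.id_comp f)

lemma yonedaEval_injective :
    Function.Injective (yonedaEval : (preadditiveYoneda.obj X ⟶ F) → F.obj (op X)) := by
  intro α β h
  ext Y (f : Y.unop ⟶ X)
  exact (app_eq_map_yonedaEval α f).trans (h ▸ (app_eq_map_yonedaEval β f).symm)

lemma yonedaEval_surjective [F.Additive] :
    Function.Surjective (yonedaEval : (preadditiveYoneda.obj X ⟶ F) → F.obj (op X)) := by
  intro x
  refine ⟨{
    app := fun Y => AddCommGrpCat.ofHom <| AddMonoidHom.mk' (fun f : Y.unop ⟶ X => F.map f.op x)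
      fun (f g : Y.unop ⟶ X) => ?_
    naturality := fun Y Y' w => ?_ }, ?_⟩
  · change F.map (f + g).op x = _
    rw [op_add, F.map_add]
    rfl
  · ext (f : Y.unop ⟶ X)
    change F.map (w.unop ≫ f).op x = F.map w (F.map f.op x)
    rw [op_comp, F.map_comp]
    rfl
  · exact ConcreteCategory.congr_hom (F.map_id (op X)) x

instance additive_preadditiveYoneda : (preadditiveYoneda (C := M)).Additive where
  map_add {X Y} f g := by
    ext W (h : W.unop ⟶ X)
    exact Preadditive.comp_add _ _ _ h f g

/-- The presheaf `X ↦ Hom(H_X, F)`. It is the largest additive subfunctor of `F`. -/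
abbrev additivization (F : Mᵒᵖ ⥤ AddCommGrpCat.{u}) : Mᵒᵖ ⥤ AddCommGrpCat.{u} :=
  preadditiveYoneda.op ⋙ preadditiveYoneda.obj F

/-- The inclusion of the additivization, given by evaluation at identities. -/
def additivizationι (F : Mᵒᵖ ⥤ AddCommGrpCat.{u}) : additivization F ⟶ F where
  app X := AddCommGrpCat.ofHom yonedaEval
  naturality X Y f := by
    ext α
    exact yonedaEval_map_comp f.unop α

instance mono_additivizationι (F : Mᵒᵖ ⥤ AddCommGrpCat.{u}) : Mono (additivizationι F) :=
  have (X : Mᵒᵖ) : Mono ((additivizationι F).app X) :=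
    (AddCommGrpCat.mono_iff_injective _).2 yonedaEval_injective
  NatTrans.mono_of_mono_app _

lemma exists_comp_additivizationι [G.Additive] (α : G ⟶ F) :
    ∃ β : G ⟶ additivization F, β ≫ additivizationι F = α := by
  have (X : Mᵒᵖ) : IsIso ((additivizationι G).app X) :=
    (ConcreteCategory.isIso_iff_bijective _).2 ⟨yonedaEval_injective, yonedaEval_surjective⟩
  have := NatIso.isIso_of_isIso_app (additivizationι G)
  refine ⟨inv (additivizationι G) ≫
    Functor.whiskerLeft preadditiveYoneda.op (preadditiveYoneda.map α), ?_⟩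
  rw [Category.assoc, IsIso.inv_comp_eq]
  rfl

end YonedaEval

/-! ### Local exactness and injective functors -/

section LocExact

variable {M : Type u} [SmallCategory M] {n : ℕ} {𝒳 : Set (NSeq M)}
  {F G H H' J Q : Mᵒᵖ ⥤ AddCommGrpCat.{u}}

/-- Every section of `G` killed by `b` lies in the image of `a` after restriction along an
admissible epimorphism. The composite `a ≫ b` is not required to vanish. -/
def LocExact (n : ℕ) (𝒳 : Set (NSeq M)) (a : F ⟶ G) (b : G ⟶ H) : Prop :=
  ∀ (X : M) (x : G.obj (op X)), b.app (op X) x = 0 → ∃ (V : M) (g : V ⟶ X), AdmEpi n 𝒳 g ∧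
    ∃ y : F.obj (op V), a.app (op V) y = G.map g.op x

/-- `J` is separated for the topology generated by admissible epimorphisms. -/
def AdmSeparated (n : ℕ) (𝒳 : Set (NSeq M)) (J : Mᵒᵖ ⥤ AddCommGrpCat.{u}) : Prop :=
  ∀ ⦃V X : M⦄ (g : V ⟶ X), AdmEpi n 𝒳 g → Function.Injective (J.map g.op)

lemma comp_app_eq_zero {a : F ⟶ G} {b : G ⟶ H} (h : a ≫ b = 0) {X : M} (x : F.obj (op X)) :
    b.app (op X) (a.app (op X) x) = 0 :=
  ConcreteCategory.congr_hom (NatTrans.congr_app h (op X)) x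

namespace LocExact

variable {a : F ⟶ G} {b : G ⟶ H}

lemma of_comp_eq (h : LocExact n 𝒳 a b) {b' : G ⟶ H'} {ψ : H' ⟶ H} (hψ : b' ≫ ψ = b) :
    LocExact n 𝒳 a b' := by
  subst hψ
  intro X x hx
  exact h X x ((congrArg (ψ.app (op X)) hx).trans (map_zero _))

lemma app_eq_zero (h : LocExact n 𝒳 a b) (hJ : AdmSeparated n 𝒳 J) {α : G ⟶ J} (hα : a ≫ α = 0)
    {X : M} {x : G.obj (op X)} (hx : b.app (op X) x = 0) : α.app (op X) x = 0 := by
  obtain ⟨V, g, hg, y, hy⟩ := h X x hx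
  refine hJ g hg ?_
  rw [map_zero, ← NatTrans.naturality_apply, ← hy, comp_app_eq_zero hα]

lemma kernel_ι_comp_eq_zero (h : LocExact n 𝒳 a b) (hJ : AdmSeparated n 𝒳 J) {α : G ⟶ J}
    (hα : a ≫ α = 0) : kernel.ι b ≫ α = 0 := by
  ext X x
  exact h.app_eq_zero hJ hα (comp_app_eq_zero (kernel.condition b) x)

variable [Preadditive M]

lemma exists_lift [F.Additive] (h : LocExact n 𝒳 a b) {X : M} {x : preadditiveYoneda.obj X ⟶ G}
    (hx : x ≫ b = 0) : ∃ (V : M) (g : V ⟶ X), AdmEpi n 𝒳 g ∧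
      ∃ y : preadditiveYoneda.obj V ⟶ F, y ≫ a = preadditiveYoneda.map g ≫ x := by
  obtain ⟨V, g, hg, y, hy⟩ := h X (yonedaEval x) (comp_app_eq_zero hx (𝟙 X))
  obtain ⟨y, rfl⟩ := yonedaEval_surjective y
  exact ⟨V, g, hg, y, yonedaEval_injective <| by rw [yonedaEval_comp, yonedaEval_map_comp, hy]⟩

lemma of_exists_lift [G.Additive] (h : ∀ (X : M) (x : preadditiveYoneda.obj X ⟶ G), x ≫ b = 0 →
      ∃ (V : M) (g : V ⟶ X), AdmEpi n 𝒳 g ∧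
        ∃ y : preadditiveYoneda.obj V ⟶ F, y ≫ a = preadditiveYoneda.map g ≫ x) :
    LocExact n 𝒳 a b := by
  intro X x hx
  obtain ⟨x, rfl⟩ := yonedaEval_surjective x
  obtain ⟨V, g, hg, y, hy⟩ := h X x (yonedaEval_injective hx)
  exact ⟨V, g, hg, yonedaEval y, by rw [← yonedaEval_comp, hy, yonedaEval_map_comp]⟩

end LocExact

lemma exists_app_eq_of_cokernel_π_app_eq_zero (f : F ⟶ G) {X : M} {x : G.obj (op X)}
    (hx : (cokernel.π f).app (op X) x = 0) : ∃ y, f.app (op X) y = x := by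
  have hex := (ShortComplex.exact_cokernel f).map
    ((evaluation Mᵒᵖ AddCommGrpCat.{u}).obj (op X))
  exact (ShortComplex.ab_exact_iff _).1 hex x hx

/-- `I` is additive, and morphisms to `I` extend along locally exact sequences whose last term is
additive. -/
structure AddInjective [Preadditive M] (n : ℕ) (𝒳 : Set (NSeq M)) (I : Mᵒᵖ ⥤ AddCommGrpCat.{u}) :
    Prop where
  additive : I.Additive
  exists_desc {F G H : Mᵒᵖ ⥤ AddCommGrpCat.{u}} [H.Additive] {a : F ⟶ G} {b : G ⟶ H}
    (hab : LocExact n 𝒳 a b) (α : G ⟶ I) : a ≫ α = 0 → ∃ β : H ⟶ I, b ≫ β = α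

lemma AdmSeparated.addInjective_additivization [Preadditive M] [Injective J]
    (hJ : AdmSeparated n 𝒳 J) : AddInjective n 𝒳 (additivization J) where
  additive := inferInstance
  exists_desc {F G H} _ a b hab α hα := by
    have hk : kernel.ι b ≫ α ≫ additivizationι J = 0 :=
      hab.kernel_ι_comp_eq_zero hJ (by rw [reassoc_of% hα, zero_comp])
    have hex := ShortComplex.exact_kernel b
    obtain ⟨β, hβ⟩ := exists_comp_additivizationι (hex.descToInjective _ hk)
    refine ⟨β, (cancel_mono (additivizationι J)).1 ?_⟩
    rw [Category.assoc, hβ]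
    exact hex.comp_descToInjective _ _

end LocExact

namespace IsNExactStructure

variable {M : Type u} [SmallCategory M] [Preadditive M] [HasFiniteBiproducts M] {n : ℕ}
  {𝒳 : Set (NSeq M)}

lemma admSeparated_sheaf (h𝒳 : IsNExactStructure n 𝒳) (hn : 1 ≤ n)
    (J : Sheaf (h𝒳.admTopology hn) AddCommGrpCat.{u}) : AdmSeparated n 𝒳 J.obj := by
  intro V X g hg x y hxy
  refine J.property.isSeparated X (Sieve.generate (Presieve.singleton g)) ⟨V, g, hg, ?_⟩ x y ?_
  · exact Sieve.le_generate _ _ _ ⟨⟩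
  · rintro Y _ ⟨_, k, _, ⟨⟩, rfl⟩
    rw [op_comp, J.obj.map_comp]
    exact congrArg (J.obj.map k.op) hxy

lemma exists_injective_admSeparated (h𝒳 : IsNExactStructure n 𝒳) (hn : 1 ≤ n)
    (Q : Mᵒᵖ ⥤ AddCommGrpCat.{u}) : ∃ (J : Mᵒᵖ ⥤ AddCommGrpCat.{u}) (p : Q ⟶ J),
      Injective J ∧ AdmSeparated n 𝒳 J ∧ LocExact n 𝒳 (0 : Q ⟶ Q) p := by
  let T := h𝒳.admTopology hn
  let ι := Injective.ι ((presheafToSheaf T _).obj Q)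
  have hι (X : Mᵒᵖ) : Function.Injective (ι.hom.app X) := by
    have : Mono (((sheafToPresheaf T _).map ι).app X) := inferInstance
    exact (AddCommGrpCat.mono_iff_injective _).1 this
  refine ⟨_, toSheafify T Q ≫ ι.hom,
    Injective.injective_of_adjoint (sheafificationAdjunction T AddCommGrpCat.{u}) _,
    h𝒳.admSeparated_sheaf hn _, fun X x hx => ?_⟩
  have hx' : (toSheafify T Q).app (op X) x = (toSheafify T Q).app (op X) 0 :=
    hι _ (hx.trans (by rw [map_zero, map_zero]))
  obtain ⟨V, g, hg, hgx⟩ := Presheaf.equalizerSieve_mem T (toSheafify T Q) _ _ hx'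
  exact ⟨V, g, hg, 0, (map_zero (Q.map g.op).hom).symm.trans (Eq.symm hgx)⟩

lemma exists_addInjective (h𝒳 : IsNExactStructure n 𝒳) (hn : 1 ≤ n)
    {F G : Mᵒᵖ ⥤ AddCommGrpCat.{u}} [G.Additive] (f : F ⟶ G) :
    ∃ (I : Mᵒᵖ ⥤ AddCommGrpCat.{u}) (v : G ⟶ I),
      AddInjective n 𝒳 I ∧ f ≫ v = 0 ∧ LocExact n 𝒳 f v := by
  obtain ⟨J, p, hinj, hJ, hp⟩ := h𝒳.exists_injective_admSeparated hn (cokernel f)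
  obtain ⟨v, hv⟩ := exists_comp_additivizationι (cokernel.π f ≫ p)
  refine ⟨additivization J, v, hJ.addInjective_additivization, ?_,
    .of_comp_eq (fun X x hx => ?_) hv⟩
  · rw [← cancel_mono (additivizationι J), Category.assoc, hv, cokernel.condition_assoc, zero_comp,
      zero_comp]
  · obtain ⟨V, g, hg, y, hy⟩ := hp X ((cokernel.π f).app (op X) x) hx
    refine ⟨V, g, hg, exists_app_eq_of_cokernel_π_app_eq_zero f ?_⟩
    rw [NatTrans.naturality_apply]
    exact hy.symm

end IsNExactStructure

/-! ### `Eff`-closed functors and acyclicity -/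

section EffClosed

variable {M : Type u} [SmallCategory M] [Preadditive M] {m n : ℕ} {𝒳 : Set (NSeq M)}
  {F G H K : Mᵒᵖ ⥤ AddCommGrpCat.{u}}

/-- For every `Z ∈ 𝒳` the sequence `0 → K(Z^{n+1}) → K(Zⁿ) → ⋯ → K(Z⁰)`, with `K(X)` replaced by
`Hom(H_X, K)`, is exact except possibly at `K(Z⁰)`. -/
structure AcyclicOn (n : ℕ) (𝒳 : Set (NSeq M)) (K : Mᵒᵖ ⥤ AddCommGrpCat.{u}) : Prop where
  eq_zero {Z : NSeq M} (hZ : Z ∈ 𝒳) {x : preadditiveYoneda.obj (Z.X (n + 1)) ⟶ K} :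
    preadditiveYoneda.map (Z.d n) ≫ x = 0 → x = 0
  exists_desc {Z : NSeq M} (hZ : Z ∈ 𝒳) {k : ℕ} (hk : k < n)
    (y : preadditiveYoneda.obj (Z.X (k + 1)) ⟶ K) : preadditiveYoneda.map (Z.d k) ≫ y = 0 →
      ∃ v : preadditiveYoneda.obj (Z.X (k + 2)) ⟶ K, preadditiveYoneda.map (Z.d (k + 1)) ≫ v = y

lemma AcyclicOn.eq_zero_of_admEpi (hK : AcyclicOn n 𝒳 K) {V X : M} {g : V ⟶ X}
    (hg : AdmEpi n 𝒳 g) {x : preadditiveYoneda.obj X ⟶ K}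
    (hx : preadditiveYoneda.map g ≫ x = 0) : x = 0 := by
  induction hg using AdmEpi.induction with
  | of_mem Z hZ => exact hK.eq_zero hZ hx

lemma effClosed_succ_iff [K.Additive] (hcx : ∀ Z ∈ 𝒳, Z.IsComplex (m + 1)) :
    EffClosed (m + 1) 𝒳 K ↔ ∀ Z ∈ 𝒳,
      (∀ x : preadditiveYoneda.obj (Z.X (m + 2)) ⟶ K,
        preadditiveYoneda.map (Z.d (m + 1)) ≫ x = 0 → x = 0) ∧
      ∀ y : preadditiveYoneda.obj (Z.X (m + 1)) ⟶ K, preadditiveYoneda.map (Z.d m) ≫ y = 0 →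
        ∃ v : preadditiveYoneda.obj (Z.X (m + 2)) ⟶ K,
          preadditiveYoneda.map (Z.d (m + 1)) ≫ v = y := by
  have hzero (Z) (hZ : Z ∈ 𝒳) (v : K.obj (op (Z.X (m + 2)))) :
      K.map (Z.d m).op (K.map (Z.d (m + 1)).op v) = 0 := by
    have : K.map (Z.d (m + 1)).op ≫ K.map (Z.d m).op = 0 := by
      rw [← K.map_comp, ← op_comp, hcx Z hZ m le_rfl, op_zero, K.map_zero]
    exact ConcreteCategory.congr_hom this v
  refine forall₂_congr fun Z hZ => ?_
  simp only [Nat.add_right_cancel_iff, forall_eq, ← yonedaEval_injective.eq_iff,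
    yonedaEval_map_comp, map_zero]
  refine and_congr ?_ ?_
  · refine (injective_iff_map_eq_zero (K.map (Z.d (m + 1)).op).hom).trans ?_
    exact yonedaEval_surjective.forall
  · refine yonedaEval_surjective.forall.trans (forall_congr' fun y => ?_)
    refine (iff_iff_implies_and_implies.trans (and_iff_left ?_)).trans
      (imp_congr_right fun _ => yonedaEval_surjective.exists)
    rintro ⟨v, hv⟩
    exact (congrArg (K.map (Z.d m).op) hv).symm.trans (hzero Z hZ v)

lemma AcyclicOn.effClosed [K.Additive] (hK : AcyclicOn (m + 1) 𝒳 K)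
    (hcx : ∀ Z ∈ 𝒳, Z.IsComplex (m + 1)) : EffClosed (m + 1) 𝒳 K :=
  (effClosed_succ_iff hcx).2 fun _ hZ => ⟨fun _ => hK.eq_zero hZ, hK.exists_desc hZ m.lt_succ_self⟩

instance additive_pullback [F.Additive] [G.Additive] (f : F ⟶ H) (g : G ⟶ H) :
    (pullback f g).Additive where
  map_add {X Y} a b := by
    refine ((IsPullback.of_hasPullback f g).map ((evaluation _ _).obj Y)).hom_ext ?_ ?_ <;>
    simp only [evaluation_obj_map, NatTrans.naturality, Preadditive.add_comp, Functor.map_add,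
      Preadditive.comp_add]

lemma EffClosed.pullback [F.Additive] [G.Additive] [H.Additive]
    (hcx : ∀ Z ∈ 𝒳, Z.IsComplex (m + 1)) (hF : EffClosed (m + 1) 𝒳 F)
    (hG : EffClosed (m + 1) 𝒳 G) (hH : EffClosed (m + 1) 𝒳 H) (f : F ⟶ H) (g : G ⟶ H) :
    EffClosed (m + 1) 𝒳 (pullback f g) := by
  rw [effClosed_succ_iff hcx] at hF hG hH ⊢
  refine fun Z hZ => ⟨fun x hx => ?_, fun y hy => ?_⟩
  · apply pullback.hom_ext
    · rw [zero_comp, (hF Z hZ).1 (x ≫ pullback.fst f g) (by rw [reassoc_of% hx, zero_comp])]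
    · rw [zero_comp, (hG Z hZ).1 (x ≫ pullback.snd f g) (by rw [reassoc_of% hx, zero_comp])]
  · obtain ⟨v, hv⟩ := (hF Z hZ).2 (y ≫ pullback.fst f g) (by rw [reassoc_of% hy, zero_comp])
    obtain ⟨w, hw⟩ := (hG Z hZ).2 (y ≫ pullback.snd f g) (by rw [reassoc_of% hy, zero_comp])
    have hvw : v ≫ f = w ≫ g := sub_eq_zero.1 <| (hH Z hZ).1 _ <| by
      rw [Preadditive.comp_sub, reassoc_of% hv, reassoc_of% hw, pullback.condition, sub_self]
    refine ⟨pullback.lift v w hvw, pullback.hom_ext ?_ ?_⟩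
    · rw [Category.assoc, pullback.lift_fst, hv]
    · rw [Category.assoc, pullback.lift_snd, hw]

lemma RepSeq.homologyWeaklyEffaceable_iff {A B : M} (S : RepSeq M n A B) :
    S.HomologyWeaklyEffaceable 𝒳 ↔ LocExact n 𝒳 (0 : S.F 0 ⟶ S.F 0) (S.τ 0) ∧
      (∀ i, i + 1 ≤ n → LocExact n 𝒳 (S.τ i) (S.τ (i + 1))) ∧
      LocExact n 𝒳 (S.τ n) (0 : S.F (n + 1) ⟶ S.F (n + 1)) := by
  refine and_congr ?_ (and_congr Iff.rfl ?_)
  · refine forall₃_congr fun X x _ => exists₂_congr fun V g => and_congr Iff.rfl ?_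
    exact ⟨fun h => ⟨0, h.symm⟩, fun ⟨y, hy⟩ => hy.symm⟩
  · exact ⟨fun h X x _ => h X x, fun h X x => h X x rfl⟩

end EffClosed

namespace IsNExactStructure

variable {M : Type u} [SmallCategory M] [Preadditive M] [HasFiniteBiproducts M] {n : ℕ}
  {𝒳 : Set (NSeq M)} {Z : NSeq M}

lemma acyclicOn_yoneda (h𝒳 : IsNExactStructure n 𝒳) (A : M) :
    AcyclicOn n 𝒳 (preadditiveYoneda.obj A) where
  eq_zero {Z} hZ x hx := by
    obtain ⟨x, rfl⟩ := preadditiveYoneda.map_surjective x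
    rw [← Functor.map_comp, Functor.map_eq_zero_iff] at hx
    have := (h𝒳.nExact Z hZ).2.2.epi
    rw [zero_of_epi_comp _ hx, Functor.map_zero]
  exists_desc {Z} hZ k hk y hy := by
    obtain ⟨y, rfl⟩ := preadditiveYoneda.map_surjective y
    rw [← Functor.map_comp, Functor.map_eq_zero_iff] at hy
    obtain ⟨v, rfl⟩ := ((h𝒳.nExact Z hZ).2.2.isWeakCokernel hk).exists_desc y hy
    exact ⟨preadditiveYoneda.map v, by rw [Functor.map_comp]⟩

lemma locExact_map_first (h𝒳 : IsNExactStructure n 𝒳) (hn : 1 ≤ n) (hZ : Z ∈ 𝒳) :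
    LocExact n 𝒳 (0 : preadditiveYoneda.obj (Z.X 0) ⟶ preadditiveYoneda.obj (Z.X 0))
      (preadditiveYoneda.map (Z.d 0)) := by
  intro X (f : X ⟶ Z.X 0) (hf : f ≫ Z.d 0 = 0)
  have := (h𝒳.nExact Z hZ).2.1.mono
  obtain rfl := zero_of_comp_mono _ hf
  obtain ⟨V, g, hg⟩ := h𝒳.exists_admEpi hn X
  exact ⟨V, g, hg, 0, (comp_zero (f := g) (Z := Z.X 0)).symm⟩

lemma locExact_map (h𝒳 : IsNExactStructure n 𝒳) (hn : 1 ≤ n) (hZ : Z ∈ 𝒳) {k : ℕ} (hk : k < n) :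
    LocExact n 𝒳 (preadditiveYoneda.map (Z.d k)) (preadditiveYoneda.map (Z.d (k + 1))) := by
  intro X (f : X ⟶ Z.X (k + 1)) (hf : f ≫ Z.d (k + 1) = 0)
  obtain ⟨V, g, hg⟩ := h𝒳.exists_admEpi hn X
  obtain ⟨y, rfl⟩ := ((h𝒳.nExact Z hZ).2.1.isWeakKernel hk).exists_lift f hf
  exact ⟨V, g, hg, (g ≫ y : V ⟶ Z.X k), Category.assoc _ _ _⟩

lemma locExact_map_last (h𝒳 : IsNExactStructure n 𝒳) (hn : 1 ≤ n) (hZ : Z ∈ 𝒳)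
    {K : Mᵒᵖ ⥤ AddCommGrpCat.{u}} (β : preadditiveYoneda.obj (Z.X (n + 1)) ⟶ K) :
    LocExact n 𝒳 (preadditiveYoneda.map (Z.d n)) β := by
  intro X (f : X ⟶ Z.X (n + 1)) _
  obtain ⟨U, p, q, hp, h⟩ := h𝒳.exists_pullback hn (.of_mem hZ) f
  exact ⟨U, p, hp, q, h.symm⟩

lemma acyclicOn_of_addInjective (h𝒳 : IsNExactStructure n 𝒳) (hn : 1 ≤ n)
    {I : Mᵒᵖ ⥤ AddCommGrpCat.{u}} (hI : AddInjective n 𝒳 I) : AcyclicOn n 𝒳 I where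
  eq_zero {Z} hZ x hx := by
    obtain ⟨β, rfl⟩ := hI.exists_desc (h𝒳.locExact_map_last hn hZ
      (0 : _ ⟶ preadditiveYoneda.obj (Z.X (n + 1)))) x hx
    exact zero_comp
  exists_desc hZ _ hk y := hI.exists_desc (h𝒳.locExact_map hn hZ hk) y

lemma good_repSeqOf (h𝒳 : IsNExactStructure n 𝒳) (hn : 1 ≤ n) {A B : M} (hZ : Z ∈ 𝒳)
    (h0 : Z.X 0 = A) (htop : Z.X (n + 1) = B) :
    (repSeqOf n Z h0 htop (h𝒳.nExact Z hZ).1).Good 𝒳 := by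
  obtain ⟨m, rfl⟩ := Nat.exists_eq_add_of_le' hn
  refine ⟨fun i _ _ => ⟨?_, ?_⟩, (RepSeq.homologyWeaklyEffaceable_iff _).2
    ⟨h𝒳.locExact_map_first hn hZ, fun i hi => h𝒳.locExact_map hn hZ hi,
      h𝒳.locExact_map_last hn hZ _⟩⟩
  · exact inferInstanceAs (preadditiveYoneda.obj (Z.X i)).Additive
  · exact (h𝒳.acyclicOn_yoneda (Z.X i)).effClosed fun Z hZ => (h𝒳.nExact Z hZ).1

end IsNExactStructure

/-! ### Injective resolutions of representable functors -/

/-- The sequence `F₀, I 0, I 1, …`. -/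
abbrev augment {C : Type*} (F₀ : C) (I : ℕ → C) : ℕ → C
  | 0 => F₀
  | i + 1 => I i

/-- A locally exact complex `0 → H_A → I 0 → I 1 → ⋯` whose terms `I i` are injective with respect
to locally exact sequences of additive functors. -/
structure Resolution {M : Type u} [SmallCategory M] [Preadditive M] (n : ℕ) (𝒳 : Set (NSeq M))
    (A : M) where
  I : ℕ → (Mᵒᵖ ⥤ AddCommGrpCat.{u})
  d : ∀ i, augment (preadditiveYoneda.obj A) I i ⟶ augment (preadditiveYoneda.obj A) I (i + 1)
  addInjective : ∀ i, AddInjective n 𝒳 (I i)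
  comp : ∀ i, d i ≫ d (i + 1) = 0
  locExact_zero : LocExact n 𝒳
    (0 : augment (preadditiveYoneda.obj A) I 0 ⟶ augment (preadditiveYoneda.obj A) I 0) (d 0)
  locExact : ∀ i, LocExact n 𝒳 (d i) (d (i + 1))

lemma IsNExactStructure.nonempty_resolution {M : Type u} [SmallCategory M] [Preadditive M]
    [HasFiniteBiproducts M] {n : ℕ} {𝒳 : Set (NSeq M)} (h𝒳 : IsNExactStructure n 𝒳) (hn : 1 ≤ n)
    (A : M) : Nonempty (Resolution n 𝒳 A) := by
  have step (a : {a : Arrow (Mᵒᵖ ⥤ AddCommGrpCat.{u}) // a.right.Additive}) :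
      ∃ (I : Mᵒᵖ ⥤ AddCommGrpCat.{u}) (v : a.1.right ⟶ I),
        AddInjective n 𝒳 I ∧ a.1.hom ≫ v = 0 ∧ LocExact n 𝒳 a.1.hom v :=
    have := a.2
    h𝒳.exists_addInjective hn a.1.hom
  choose I v hI hcomp hexact using step
  let s : ℕ → {a : Arrow (Mᵒᵖ ⥤ AddCommGrpCat.{u}) // a.right.Additive} := fun i => Nat.rec
    ⟨Arrow.mk (0 : preadditiveYoneda.obj A ⟶ preadditiveYoneda.obj A),
      inferInstanceAs (preadditiveYoneda.obj A).Additive⟩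
    (fun _ a => ⟨Arrow.mk (v a), (hI a).additive⟩) i
  exact ⟨{
    I := fun i => I (s i)
    d := fun | 0 => v (s 0) | i + 1 => v (s (i + 1))
    addInjective := fun i => hI (s i)
    comp := fun | 0 => hcomp (s 1) | i + 1 => hcomp (s (i + 2))
    locExact_zero := hexact (s 0)
    locExact := fun | 0 => hexact (s 1) | i + 1 => hexact (s (i + 2)) }⟩

namespace Resolution

section

variable {M : Type u} [SmallCategory M] [Preadditive M] {n : ℕ} {𝒳 : Set (NSeq M)} {A : M}
  (R : Resolution n 𝒳 A)

/-- The terms of a resolution, including the resolved functor `H_A` in degree `0`. -/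
abbrev G : ℕ → (Mᵒᵖ ⥤ AddCommGrpCat.{u}) := augment (preadditiveYoneda.obj A) R.I

instance additive_I (i : ℕ) : (R.I i).Additive := (R.addInjective i).additive

instance additive_G : ∀ i, (R.G i).Additive
  | 0 => inferInstanceAs (preadditiveYoneda.obj A).Additive
  | i + 1 => R.additive_I i

lemma exists_chainMap {S : ℕ → (Mᵒᵖ ⥤ AddCommGrpCat.{u})} {dS : ∀ i, S i ⟶ S (i + 1)} (N : ℕ)
    (hadd : ∀ i ≤ N, (S (i + 1)).Additive) (h0 : LocExact n 𝒳 (0 : S 0 ⟶ S 0) (dS 0))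
    (hexact : ∀ i, i + 1 ≤ N → LocExact n 𝒳 (dS i) (dS (i + 1))) (f₀ : S 0 ⟶ R.G 0) :
    ∃ f : ∀ i, S i ⟶ R.G i, f 0 = f₀ ∧ ∀ i, i ≤ N → dS i ≫ f (i + 1) = f i ≫ R.d i := by
  have := hadd 0 (Nat.zero_le N)
  obtain ⟨f₁, hf₁⟩ := (R.addInjective 0).exists_desc h0 (f₀ ≫ R.d 0) zero_comp
  obtain ⟨f, hf₀, -, hf⟩ := exists_chainMap_of_first (N + 1) (fun i _ => R.comp i)
    (fun i hi α hα =>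
      have := hadd (i + 1) (by omega)
      (R.addInjective (i + 1)).exists_desc (hexact i (by omega)) α hα) hf₁
  exact ⟨f, hf₀, fun i hi => hf i (by omega)⟩

/-- The sequences `Hom(H_C, G q) → Hom(H_C, G (q + 1)) → Hom(H_C, G (q + 2))` are exact for all
`C`. -/
def HomExactAt (q : ℕ) : Prop :=
  ∀ (C : M) (x : preadditiveYoneda.obj C ⟶ R.G (q + 1)), x ≫ R.d (q + 1) = 0 →
    ∃ y : preadditiveYoneda.obj C ⟶ R.G q, y ≫ R.d q = x

end

variable {M : Type u} [SmallCategory M] [Preadditive M] [HasFiniteBiproducts M] {n : ℕ}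
  {𝒳 : Set (NSeq M)} {A : M} (R : Resolution n 𝒳 A)

lemma acyclicOn (h𝒳 : IsNExactStructure n 𝒳) (hn : 1 ≤ n) : ∀ i, AcyclicOn n 𝒳 (R.G i)
  | 0 => h𝒳.acyclicOn_yoneda A
  | i + 1 => h𝒳.acyclicOn_of_addInjective hn (R.addInjective i)

lemma eq_zero (h𝒳 : IsNExactStructure n 𝒳) (hn : 1 ≤ n) {C : M}
    {x : preadditiveYoneda.obj C ⟶ R.G 0} (hx : x ≫ R.d 0 = 0) : x = 0 := by
  obtain ⟨V, g, hg, y, hy⟩ := R.locExact_zero.exists_lift hx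
  exact (R.acyclicOn h𝒳 hn 0).eq_zero_of_admEpi hg (hy.symm.trans comp_zero)

lemma exists_desc_comp_d (h𝒳 : IsNExactStructure n 𝒳) (hn : 1 ≤ n) {j k : ℕ}
    (hR : ∀ q < j, R.HomExactAt q) {Z : NSeq M} (hZ : Z ∈ 𝒳) (hjk : j ≤ k) (hk : k < n)
    {y : preadditiveYoneda.obj (Z.X (k + 1)) ⟶ R.G j}
    (hy : preadditiveYoneda.map (Z.d k) ≫ y ≫ R.d j = 0) :
    ∃ v : preadditiveYoneda.obj (Z.X (k + 2)) ⟶ R.G j,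
      preadditiveYoneda.map (Z.d (k + 1)) ≫ v ≫ R.d j = y ≫ R.d j := by
  induction j generalizing k with
  | zero =>
    obtain ⟨v, rfl⟩ := (R.acyclicOn h𝒳 hn 0).exists_desc hZ hk y
      (R.eq_zero h𝒳 hn (by rw [Category.assoc, hy]))
    exact ⟨v, by rw [Category.assoc]⟩
  | succ j ih =>
    obtain ⟨k, rfl⟩ := Nat.exists_eq_add_of_le' (j.succ_pos.trans_le hjk)
    obtain ⟨y', hy'⟩ := hR j j.lt_succ_self _ (preadditiveYoneda.map (Z.d (k + 1)) ≫ y)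
      (by rw [Category.assoc, hy])
    obtain ⟨v', hv'⟩ := ih (fun q hq => hR q (by omega)) (Nat.le_of_succ_le_succ hjk)
        (Nat.lt_of_succ_lt hk) (y := y') <| by
      rw [hy', ← Functor.map_comp_assoc, (h𝒳.nExact Z hZ).1 k hk.le, Functor.map_zero, zero_comp]
    obtain ⟨v, hv⟩ := (R.acyclicOn h𝒳 hn (j + 1)).exists_desc hZ hk (y - v' ≫ R.d j) <| by
      rw [Preadditive.comp_sub, ← hy', hv', sub_self]
    refine ⟨v, ?_⟩
    rw [reassoc_of% hv, Preadditive.sub_comp, Category.assoc, R.comp, comp_zero, sub_zero]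

lemma homExactAt (h𝒳 : IsNExactStructure n 𝒳) (hn : 1 ≤ n) {q : ℕ} (hq : q < n) :
    R.HomExactAt q := by
  obtain ⟨m, rfl⟩ := Nat.exists_eq_add_of_le' hn
  induction q using Nat.strong_induction_on with
  | _ q ih =>
    intro C x hx
    obtain ⟨V, g, hg, y, hy⟩ := (R.locExact q).exists_lift hx
    induction hg using AdmEpi.induction with
    | of_mem Z hZ =>
      obtain ⟨v, hv⟩ := R.exists_desc_comp_d h𝒳 hn (fun r hr => ih r hr (hr.trans hq)) hZ
        (Nat.le_of_lt_succ hq) m.lt_succ_self (y := y) <| by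
          rw [hy, ← Functor.map_comp_assoc, (h𝒳.nExact Z hZ).1 m le_rfl, Functor.map_zero,
            zero_comp]
      refine ⟨v, sub_eq_zero.1 ((R.acyclicOn h𝒳 hn (q + 1)).eq_zero hZ ?_)⟩
      rw [Preadditive.comp_sub, hv, hy, sub_self]

end Resolution

/-! ### Pulling back a resolution along a morphism from a representable functor -/

namespace Resolution

section

variable {M : Type u} [SmallCategory M] [Preadditive M] {m : ℕ} {𝒳 : Set (NSeq M)} {A B : M}
  (R : Resolution (m + 1) 𝒳 A) (z : preadditiveYoneda.obj B ⟶ R.G (m + 2))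

/-- The morphism into the pullback of `d` along `z` with components `d` and `0`. -/
noncomputable def toPullback : R.G m ⟶ pullback (R.d (m + 1)) z :=
  pullback.lift (R.d m) 0 (by rw [R.comp, zero_comp])

lemma toPullback_fst : R.toPullback z ≫ pullback.fst _ _ = R.d m := pullback.lift_fst _ _ _

lemma toPullback_snd : R.toPullback z ≫ pullback.snd _ _ = 0 := pullback.lift_snd _ _ _

lemma d_comp_toPullback {i : ℕ} (h : i + 1 = m) :
    R.d i ≫ eqToHom (congrArg R.G h) ≫ R.toPullback z = 0 := by
  subst h
  rw [eqToHom_refl, Category.id_comp]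
  apply pullback.hom_ext
  · rw [Category.assoc, toPullback_fst, R.comp, zero_comp]
  · rw [Category.assoc, toPullback_snd, comp_zero, zero_comp]

lemma locExact_d_toPullback {i : ℕ} (h : i + 1 = m) :
    LocExact (m + 1) 𝒳 (R.d i) (eqToHom (congrArg R.G h) ≫ R.toPullback z) := by
  subst h
  rw [eqToHom_refl, Category.id_comp]
  exact (R.locExact i).of_comp_eq (R.toPullback_fst z)

lemma locExact_toPullback :
    LocExact (m + 1) 𝒳 (R.toPullback z) (pullback.snd (R.d (m + 1)) z) := by
  refine .of_exists_lift fun X x hx => ?_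
  have hx' : (x ≫ pullback.fst _ _) ≫ R.d (m + 1) = 0 := by
    rw [Category.assoc, pullback.condition, reassoc_of% hx, zero_comp]
  obtain ⟨V, g, hg, y, hy⟩ := (R.locExact m).exists_lift hx'
  refine ⟨V, g, hg, y, pullback.hom_ext ?_ ?_⟩
  · rw [Category.assoc, toPullback_fst, hy, Category.assoc]
  · rw [Category.assoc, toPullback_snd, comp_zero, Category.assoc, hx, comp_zero]

lemma locExact_pullback_snd {z : preadditiveYoneda.obj B ⟶ R.G (m + 2)}
    (hz : z ≫ R.d (m + 2) = 0) {K : Mᵒᵖ ⥤ AddCommGrpCat.{u}} (β : preadditiveYoneda.obj B ⟶ K) :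
    LocExact (m + 1) 𝒳 (pullback.snd (R.d (m + 1)) z) β := by
  refine .of_exists_lift fun X x _ => ?_
  have hx' : (x ≫ z) ≫ R.d (m + 2) = 0 := by rw [Category.assoc, hz, comp_zero]
  obtain ⟨V, g, hg, y, hy⟩ := (R.locExact (m + 1)).exists_lift hx'
  exact ⟨V, g, hg, pullback.lift y (preadditiveYoneda.map g ≫ x) (by rw [hy, Category.assoc]),
    pullback.lift_snd _ _ _⟩

/-- The complex `0 → H_A → G 1 → ⋯ → G m → P → H_B → 0`, where `P` is the pullback of
`G (m + 1) → G (m + 2)` along `z`. -/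
noncomputable def pullbackRepSeq : RepSeq M (m + 1) A B where
  F i := spliceX (pullback (R.d (m + 1)) z) (preadditiveYoneda.obj B) i m R.G
  τ i := spliceD (pullback.snd (R.d (m + 1)) z) i m R.G R.d (R.toPullback z)
  hF0 := rfl
  hFtop := spliceX_last _ _ m R.G
  isComplex _ hi := spliceD_consecutive (motive := fun {_ _ _} d d' => d ≫ d' = 0)
    (D := R.d) (q := pullback.snd (R.d (m + 1)) z)
    (fun i _ => R.comp i) (fun _ h => R.d_comp_toPullback z h) (R.toPullback_snd z)
    (Nat.le_of_succ_le_succ hi)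

lemma homologyWeaklyEffaceable_pullbackRepSeq {z : preadditiveYoneda.obj B ⟶ R.G (m + 2)}
    (hz : z ≫ R.d (m + 2) = 0) : (R.pullbackRepSeq z).HomologyWeaklyEffaceable 𝒳 := by
  refine (RepSeq.homologyWeaklyEffaceable_iff _).2 ⟨?_, fun i hi => ?_, ?_⟩
  · refine spliceD_first (motive := fun {X _} d => LocExact (m + 1) 𝒳 (0 : X ⟶ X) d)
      (D := R.d) (q := pullback.snd (R.d (m + 1)) z) (fun _ => R.locExact_zero) fun h => ?_
    subst h
    rw [eqToHom_refl, Category.id_comp]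
    exact R.locExact_zero.of_comp_eq (R.toPullback_fst z)
  · exact spliceD_consecutive (motive := fun {_ _ _} d d' => LocExact (m + 1) 𝒳 d d')
      (D := R.d) (q := pullback.snd (R.d (m + 1)) z) (fun i _ => R.locExact i)
      (fun _ h => R.locExact_d_toPullback z h) (R.locExact_toPullback z) (Nat.le_of_succ_le_succ hi)
  · exact spliceD_last (motive := fun {_ Y} d => LocExact (m + 1) 𝒳 d (0 : Y ⟶ Y))
      (D := R.d) (q := pullback.snd (R.d (m + 1)) z) (R.locExact_pullback_snd hz 0)

lemma repSeqConnects_pullbackRepSeq {z : preadditiveYoneda.obj B ⟶ R.G (m + 2)}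
    {T : RepSeq M (m + 1) A B} {e : ∀ i, T.F i ⟶ R.G i}
    (he : ∀ i, i ≤ m + 1 → T.τ i ≫ e (i + 1) = e i ≫ R.d i) (he₀ : e 0 = eqToHom T.hF0)
    (hlast : e (m + 2) = eqToHom T.hFtop ≫ z) : RepSeqConnects T (R.pullbackRepSeq z) := by
  have hw : e (m + 1) ≫ R.d (m + 1) = (T.τ (m + 1) ≫ eqToHom T.hFtop) ≫ z := by
    rw [← he (m + 1) le_rfl, hlast, Category.assoc]
  have hl : T.τ m ≫ pullback.lift _ _ hw = e m ≫ R.toPullback z := by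
    apply pullback.hom_ext
    · rw [Category.assoc, pullback.lift_fst, he m m.le_succ, Category.assoc, toPullback_fst]
    · rw [Category.assoc, pullback.lift_snd, reassoc_of% T.isComplex m le_rfl, zero_comp,
        Category.assoc, toPullback_snd, comp_zero]
  obtain ⟨φ, hφ, hφ₀, hφlast⟩ := exists_chainMap_splice e
    (fun i hi => he i (hi.le.trans m.le_succ)) hl (pullback.lift_snd _ _ hw).symm
  exact ⟨φ, hφ, hφ₀.trans he₀, hφlast.trans (eqToHom_trans _ _)⟩

end

variable {M : Type u} [SmallCategory M] [Preadditive M] [HasFiniteBiproducts M] {m : ℕ}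
  {𝒳 : Set (NSeq M)} {A B : M} (R : Resolution (m + 1) 𝒳 A)

lemma good_pullbackRepSeq (h𝒳 : IsNExactStructure (m + 1) 𝒳)
    {z : preadditiveYoneda.obj B ⟶ R.G (m + 2)} (hz : z ≫ R.d (m + 2) = 0) :
    (R.pullbackRepSeq z).Good 𝒳 := by
  have hcx (Z) (hZ : Z ∈ 𝒳) : Z.IsComplex (m + 1) := (h𝒳.nExact Z hZ).1
  have heff (i : ℕ) : EffClosed (m + 1) 𝒳 (R.G i) :=
    (R.acyclicOn h𝒳 (Nat.le_add_left 1 m) i).effClosed hcx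
  have hB := (h𝒳.acyclicOn_yoneda B).effClosed hcx
  exact ⟨fun i _ hi => spliceX_induction
      (motive := fun F : Mᵒᵖ ⥤ AddCommGrpCat.{u} => F.Additive ∧ EffClosed (m + 1) 𝒳 F)
      (fun i _ => ⟨inferInstance, heff i⟩)
      ⟨inferInstance, (heff _).pullback hcx hB (heff _) _ _⟩ hi,
    R.homologyWeaklyEffaceable_pullbackRepSeq hz⟩

end Resolution

/-! ### Cocycles of a resolution and admissible sequences -/

namespace Resolution

section

variable {M : Type u} [SmallCategory M] [Preadditive M] {n : ℕ} {𝒳 : Set (NSeq M)} {A B : M}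
  (R : Resolution n 𝒳 A)

lemma exists_chainMap_of_homologyWeaklyEffaceable {ξ : RepSeq M n A B}
    (hadd : ∀ i, 1 ≤ i → i ≤ n → (ξ.F i).Additive) (hξ : ξ.HomologyWeaklyEffaceable 𝒳) :
    ∃ (z : preadditiveYoneda.obj B ⟶ R.G (n + 1)) (e : ∀ i, ξ.F i ⟶ R.G i),
      z ≫ R.d (n + 1) = 0 ∧ (∀ i, i ≤ n → ξ.τ i ≫ e (i + 1) = e i ≫ R.d i) ∧
        e 0 = eqToHom ξ.hF0 ∧ e (n + 1) = eqToHom ξ.hFtop ≫ z := by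
  obtain ⟨hfirst, hmid, hlast⟩ := ξ.homologyWeaklyEffaceable_iff.1 hξ
  have hadd_last : (ξ.F (n + 1)).Additive := by rw [ξ.hFtop]; infer_instance
  have hadd_succ (i : ℕ) (hi : i ≤ n) : (ξ.F (i + 1)).Additive := by
    obtain rfl | hi := hi.eq_or_lt
    · exact hadd_last
    · exact hadd (i + 1) (Nat.le_add_left 1 i) hi
  obtain ⟨e, he₀, he⟩ := R.exists_chainMap n hadd_succ hfirst hmid (eqToHom ξ.hF0)
  have hzero : ξ.τ n ≫ e (n + 1) ≫ R.d (n + 1) = 0 := by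
    rw [← Category.assoc, he n le_rfl, Category.assoc, R.comp, comp_zero]
  obtain ⟨β, hβ⟩ := (R.addInjective (n + 1)).exists_desc hlast _ hzero
  refine ⟨eqToHom ξ.hFtop.symm ≫ e (n + 1), e, ?_, he, he₀, by simp⟩
  rw [Category.assoc, ← hβ, zero_comp, comp_zero]

end

variable {M : Type u} [SmallCategory M] [Preadditive M] [HasFiniteBiproducts M] {n : ℕ}
  {𝒳 : Set (NSeq M)} {A B : M} (R : Resolution n 𝒳 A)

lemma exists_chainMap_of_mem (h𝒳 : IsNExactStructure n 𝒳) (hn : 1 ≤ n) {Z : NSeq M} (hZ : Z ∈ 𝒳)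
    (f₀ : preadditiveYoneda.obj (Z.X 0) ⟶ R.G 0) :
    ∃ f : ∀ i, preadditiveYoneda.obj (Z.X i) ⟶ R.G i, f 0 = f₀ ∧
      ∀ i, i ≤ n → preadditiveYoneda.map (Z.d i) ≫ f (i + 1) = f i ≫ R.d i := by
  have hlocExact (i : ℕ) (hi : i + 1 ≤ n) := h𝒳.locExact_map hn hZ hi
  exact R.exists_chainMap (S := fun i => preadditiveYoneda.obj (Z.X i)) n
    (fun _ _ => inferInstance) (h𝒳.locExact_map_first hn hZ) hlocExact f₀

lemma exists_chainMap_with_last_of_mem (h𝒳 : IsNExactStructure n 𝒳) (hn : 1 ≤ n)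
    {z : preadditiveYoneda.obj B ⟶ R.G (n + 1)} (hz : z ≫ R.d (n + 1) = 0) :
    ∃ Z ∈ 𝒳, ∃ (htop : Z.X (n + 1) = B) (c : ∀ i, preadditiveYoneda.obj (Z.X i) ⟶ R.G i),
      (∀ i, i ≤ n → preadditiveYoneda.map (Z.d i) ≫ c (i + 1) = c i ≫ R.d i) ∧
      c (n + 1) = eqToHom (congrArg preadditiveYoneda.obj htop) ≫ z := by
  obtain ⟨V, g, hg, y, hy⟩ := (R.locExact n).exists_lift hz
  induction hg using AdmEpi.induction with
  | of_mem Z hZ =>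
    obtain ⟨c, hclast, hc⟩ := exists_chainMap_of_last n
      (S := fun i => preadditiveYoneda.obj (Z.X i)) (dS := fun i => preadditiveYoneda.map (Z.d i))
      (fun i hi => by rw [← Functor.map_comp, (h𝒳.nExact Z hZ).1 i hi, Functor.map_zero])
      (fun i hi => R.homExactAt h𝒳 hn hi (Z.X i)) hy.symm
    exact ⟨Z, hZ, rfl, c, hc, by rw [hclast, eqToHom_refl, Category.id_comp]⟩

theorem exists_mem_chainMap (h𝒳 : IsNExactStructure n 𝒳) (hn : 1 ≤ n)
    {z : preadditiveYoneda.obj B ⟶ R.G (n + 1)} (hz : z ≫ R.d (n + 1) = 0) :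
    ∃ Z ∈ 𝒳, ∃ (h0 : Z.X 0 = A) (htop : Z.X (n + 1) = B)
      (e : ∀ i, preadditiveYoneda.obj (Z.X i) ⟶ R.G i),
      (∀ i, i ≤ n → preadditiveYoneda.map (Z.d i) ≫ e (i + 1) = e i ≫ R.d i) ∧
      e 0 = eqToHom (congrArg preadditiveYoneda.obj h0) ∧
      e (n + 1) = eqToHom (congrArg preadditiveYoneda.obj htop) ≫ z := by
  obtain ⟨Z, hZ, rfl, c, hc, hclast⟩ := R.exists_chainMap_with_last_of_mem h𝒳 hn hz
  obtain ⟨f₀, hf₀⟩ := preadditiveYoneda.map_surjective (c 0)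
  obtain ⟨T, hT, h0, htop, t, ht, ht₀, htlast⟩ := h𝒳.exists_pushout hn hZ f₀
  obtain ⟨e, he₀, he⟩ := R.exists_chainMap_of_mem h𝒳 hn hT
    (eqToHom (congrArg preadditiveYoneda.obj h0))
  have hcomm (i : ℕ) (hi : i ≤ n) : preadditiveYoneda.map (Z.d i) ≫
      (preadditiveYoneda.map (t (i + 1)) ≫ e (i + 1) - c (i + 1)) =
        (preadditiveYoneda.map (t i) ≫ e i - c i) ≫ R.d i := by
    rw [Preadditive.comp_sub, Preadditive.sub_comp, hc i hi, Category.assoc, ← he i hi,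
      ← Functor.map_comp_assoc, ht i hi, Functor.map_comp_assoc]
  have hzero : preadditiveYoneda.map (t 0) ≫ e 0 - c 0 = 0 := by
    rw [ht₀, he₀, Functor.map_comp, hf₀, eqToHom_map, Category.assoc, eqToHom_trans,
      eqToHom_refl, Category.comp_id, sub_self]
  obtain ⟨s, hs⟩ := exists_last_eq_comp_of_first_eq_zero
    (f := fun i => preadditiveYoneda.map (t i) ≫ e i - c i) n (fun i _ => R.comp i)
    (fun i hi => (R.acyclicOn h𝒳 hn (i + 1)).exists_desc hZ hi)
    (fun _ => (R.acyclicOn h𝒳 hn (n + 1)).eq_zero hZ) hcomm hzero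
  have hs' : e (n + 1) - eqToHom (congrArg preadditiveYoneda.obj htop) ≫ z =
      (eqToHom (congrArg preadditiveYoneda.obj htop) ≫ s) ≫ R.d n := by
    rw [Category.assoc, ← hs, hclast, htlast, eqToHom_map, Preadditive.comp_sub]
    simp
  obtain ⟨g, hg, hge, hglast⟩ := exists_chainMap_with_last
    (fun i hi => by rw [← Functor.map_comp, (h𝒳.nExact T hT).1 i hi, Functor.map_zero]) he hs'
  exact ⟨T, hT, h0, htop, g, hg, (hge 0 hn).trans he₀, hglast⟩

end Resolution

theorem exists_admissible_yoneda_equivalent_general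
    {M : Type u} [SmallCategory M] [Preadditive M] [HasFiniteBiproducts M] {n : ℕ} (hn : 1 ≤ n)
    {𝒳 : Set (NSeq M)} (h𝒳 : IsNExactStructure n 𝒳) {A B : M} (ξ : RepSeq M n A B)
    (hadd : ∀ i, 1 ≤ i → i ≤ n → (ξ.F i).Additive) (hξ : ξ.HomologyWeaklyEffaceable 𝒳) :
    ∃ (Z : NSeq M) (hZ : Z ∈ 𝒳) (h0 : Z.X 0 = A) (htop : Z.X (n + 1) = B) (S : RepSeq M n A B),
      S.Good 𝒳 ∧ RepSeqConnects ξ S ∧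
        RepSeqConnects (repSeqOf n Z h0 htop (h𝒳.nExact Z hZ).1) S := by
  obtain ⟨m, rfl⟩ := Nat.exists_eq_add_of_le' hn
  obtain ⟨R⟩ := h𝒳.nonempty_resolution hn A
  obtain ⟨z, e, hz, he, he₀, helast⟩ := R.exists_chainMap_of_homologyWeaklyEffaceable hadd hξ
  obtain ⟨Z, hZ, h0, htop, f, hf, hf₀, hflast⟩ := R.exists_mem_chainMap h𝒳 hn hz
  exact ⟨Z, hZ, h0, htop, R.pullbackRepSeq z, R.good_pullbackRepSeq h𝒳 hz,
    R.repSeqConnects_pullbackRepSeq he he₀ helast, R.repSeqConnects_pullbackRepSeq hf hf₀ hflast⟩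

/-- Let `(M,𝒳)` be a small `n`-exact category, `Y, X^{n+1} ∈ M`, and
`ξ : 0 → H_Y → E¹ → ⋯ → Eⁿ → H_{X^{n+1}} → 0` a complex in `Mod(M)` whose middle terms are
additive and `Eff`-closed and all of whose homology is weakly effaceable (an `n`-fold extension
of `H_{X^{n+1}}` by `H_Y` in the localization of `Mod(M)` at the weakly effaceable functors).
Then there is an `𝒳`-admissible `n`-exact sequence `Y → Y¹ → ⋯ → Yⁿ → X^{n+1}` in `M` such
that `ξ` is connected to its complex of representables by a finite zigzag of complexes of the
same form, via morphisms of complexes restricting to the identity on `H_Y` and `H_{X^{n+1}}`: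
up to Yoneda equivalence, the essential image of `M` in the localization is closed under
`n`-extensions. -/
theorem exists_admissible_yoneda_equivalent
    {M : Type u} [SmallCategory M] [Preadditive M] [HasFiniteBiproducts M]
    (n : ℕ) (hn : 1 ≤ n) (𝒳 : Set (NSeq M)) (h𝒳 : IsNExactStructure n 𝒳)
    (A B : M) (ξ : RepSeq M n A B) (hξ : ξ.Good 𝒳) :
    ∃ (Z : NSeq M) (hZ : Z ∈ 𝒳) (h0 : Z.X 0 = A) (htop : Z.X (n + 1) = B),
      Relation.ReflTransGen (RepSeqStep 𝒳) ξ
        (repSeqOf n Z h0 htop (h𝒳.nExact Z hZ).1) := by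
  obtain ⟨Z, hZ, h0, htop, S, hS, h₁, h₂⟩ := exists_admissible_yoneda_equivalent_general hn h𝒳 ξ
    (fun i hi hin => (hξ.1 i hi hin).1) hξ.2
  exact ⟨Z, hZ, h0, htop, .tail (.single ⟨hξ, hS, .inl h₁⟩)
    ⟨hS, h𝒳.good_repSeqOf hn hZ h0 htop, .inr h₂⟩⟩

end NExactCat
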